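/- arXiv:math/9605202 — 3 statements merged into one kernel-verified Lean document; each statement's English description precedes it below -/
import Mathlib

section
/- Let (d_n)_{n∈ℕ} be a sequence of integers with d_n ≥ 2 and (q_n)_{n∈ℕ} a sequence of prime powers such that: (1) whenever d_n = 2, then q_n > 3; and (2) there does NOT exist an infinite subset I of ℕ and an integer d such that d_n = d for all n ∈ I and the q_n for n ∈ I are strictly increasing (i.e., q_n < q_m whenever n, m ∈ I and n < m). Then c(∏_{n∈ℕ} SL(d_n, GF(q_n))) > ω; that is, the full direct product of the special linear groups SL_{d_n}(GF(q_n)) cannot be written as the union of a countable increasing chain of proper subgroups. -/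
/-!
Let `H 0 ≤ H 1 ≤ …` be subgroups with union `∏ n, SL (d n, F n)`; we show that some `H t` is the
whole group. As the indices can be partitioned into finitely many classes, treated one at a time,
two cases matter.

On a class where `d` and the cardinality of `F` are constant, the product is a power `Γ ^ A` of a
finite perfect group. After finitely many steps `H t` contains the constant functions, and then the
sets `X` for which it contains all functions constant on `X` and `1` elsewhere form a Boolean
algebra, as `⁅x, y⁆` on `X ∩ Y` is the commutator of `x` on `X` and `y` on `Y`. But the power set of
`A` is not the union of an increasing sequence of proper subalgebras.

On a class where `d` is large, a diagonal argument shows that for some `j` all the elements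
`1 + M`, with `M` supported on a fixed block with `d n / 2 ^ j` rows, lie in a single `H t`.
Conjugation by even permutations moves this block anywhere, so that the same holds for every block
of rows and columns with disjoint sets of indices. By Whitehead's lemma it then holds for the
matrices `diag (A, A⁻¹)`. An upper unitriangular `u` can be written as
`diag (g, 1) * τ * diag (1, g)⁻¹` where `τ` differs from `1` in the last column only; copying `g⁻¹`
into spare coordinates turns this into a product of bounded length, for unitriangular matrices in
half of the coordinates and hence for all of them. Finally, every matrix of determinant one over a
field is a product of four unitriangular matrices.
-/

open Function Set Matrix
open scoped commutatorElement Pointwise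

section BooleanChain

variable {A : Type*} {B : ℕ → BooleanSubalgebra (Set A)} {X Y D : Set A}

/-- A set is absorbed by a chain of set algebras if one member of the chain contains its whole
power set. -/
def IsAbsorbed (B : ℕ → BooleanSubalgebra (Set A)) (X : Set A) : Prop :=
  ∃ t, 𝒫 X ⊆ B t

theorem isAbsorbed_empty (B : ℕ → BooleanSubalgebra (Set A)) : IsAbsorbed B ∅ :=
  ⟨0, fun _ hY ↦ subset_empty_iff.mp hY ▸ BooleanSubalgebra.bot_mem⟩

theorem IsAbsorbed.union (hB : Monotone B) (hX : IsAbsorbed B X) (hY : IsAbsorbed B Y) :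
    IsAbsorbed B (X ∪ Y) := by
  obtain ⟨s, hs⟩ := hX
  obtain ⟨t, ht⟩ := hY
  refine ⟨max s t, fun Z hZ ↦ ?_⟩
  rw [← inter_eq_left.mpr hZ, inter_union_distrib_left]
  exact BooleanSubalgebra.sup_mem (hB (le_max_left s t) (hs inter_subset_right))
    (hB (le_max_right s t) (ht inter_subset_right))

theorem exists_isAbsorbed_of_pairwise_disjoint (hB : Monotone B) (h : ∀ X, ∃ t, X ∈ B t)
    {C : ℕ → Set A} (hC : Pairwise (Disjoint on C)) : ∃ k, IsAbsorbed B (C k) := by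
  by_contra! hbad
  choose s hs using fun k ↦ h (C k)
  choose Y hYC hYB using fun k ↦ not_subset.mp fun hk ↦ hbad k ⟨max k (s k), hk⟩
  obtain ⟨t, ht⟩ := h (⋃ k, Y k)
  refine hYB t ?_
  have hYt : Y t = (⋃ k, Y k) ∩ C t := by
    refine (subset_inter (subset_iUnion Y t) (hYC t)).antisymm ?_
    rintro a ⟨ha, hat⟩
    obtain ⟨k, hk⟩ := mem_iUnion.mp ha
    rwa [← hC.eq (not_disjoint_iff.mpr ⟨a, hYC k hk, hat⟩)]
  rw [hYt]
  exact BooleanSubalgebra.inf_mem (hB (le_max_left _ _) ht) (hB (le_max_right _ _) (hs t))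

theorem exists_not_isAbsorbed_forall_subset (hB : Monotone B) (h : ∀ X, ∃ t, X ∈ B t)
    (hX : ¬ IsAbsorbed B X) :
    ∃ D, ¬ IsAbsorbed B D ∧ ∀ Y ⊆ D, IsAbsorbed B Y ∨ IsAbsorbed B (D \ Y) := by
  have hwf : WellFounded fun Y Z : Set A ↦ Y ⊆ Z ∧ ¬ IsAbsorbed B (Z \ Y) := by
    rw [wellFounded_iff_isEmpty_descending_chain]
    refine ⟨fun ⟨C, hC⟩ ↦ ?_⟩
    have hanti : Antitone C := antitone_nat_of_succ_le fun k ↦ (hC k).1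
    obtain ⟨k, hk⟩ := exists_isAbsorbed_of_pairwise_disjoint hB h
      (C := fun k ↦ C k \ C (k + 1)) <| (symm_disjoint.pairwise_on _).mpr fun i j hij ↦
        disjoint_left.mpr fun _ hi hj ↦ hi.2 (hanti hij hj.1)
    exact (hC k).2 hk
  obtain ⟨D, hD, hmin⟩ := hwf.has_min {Y | ¬ IsAbsorbed B Y} ⟨X, hX⟩
  refine ⟨D, hD, fun Y hY ↦ ?_⟩
  by_contra! hcon
  exact hmin Y hcon.1 ⟨hY, hcon.2⟩

theorem exists_disjoint_seq_isAbsorbed (hB : Monotone B)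
    (h : ∀ t, ∃ X ⊆ D, IsAbsorbed B X ∧ X ∉ B t) :
    ∃ Y : ℕ → Set A, Pairwise (Disjoint on Y) ∧ ∀ k, Y k ⊆ D ∧ Y k ∉ B k := by
  classical
  obtain ⟨f, hf, hlt⟩ := exists_seq_of_forall_finset_exists
    (fun p : ℕ × Set A ↦ p.2 ⊆ D ∧ IsAbsorbed B p.2 ∧ p.2 ∉ B p.1)
    (fun p q ↦ Disjoint p.2 q.2 ∧ p.1 < q.1) fun s hs ↦ by
      have hU : IsAbsorbed B (s.sup Prod.snd) :=
        Finset.sup_induction (isAbsorbed_empty B) (fun _ hX _ hY ↦ hX.union hB hY)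
          fun p hp ↦ (hs p hp).2.1
      set U := s.sup Prod.snd
      obtain ⟨r, hr⟩ := hU
      obtain ⟨X, hXD, ⟨v, hv⟩, hX⟩ := h (max r (s.sup Prod.fst + 1))
      refine ⟨(max r (s.sup Prod.fst + 1), X \ U), ⟨sdiff_subset.trans hXD,
        ⟨v, (powerset_mono.mpr sdiff_subset).trans hv⟩, fun hmem ↦ hX ?_⟩,
        fun p hp ↦ ⟨disjoint_sdiff_right.mono_left (Finset.le_sup (f := Prod.snd) hp),
          (Nat.lt_succ_of_le (Finset.le_sup (f := Prod.fst) hp)).trans_le (le_max_right _ _)⟩⟩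
      rw [← sdiff_union_inter X U]
      exact BooleanSubalgebra.sup_mem hmem (hB (le_max_left _ _) (hr inter_subset_right))
  have hid (k : ℕ) : k ≤ (f k).1 :=
    StrictMono.le_apply (f := fun k ↦ (f k).1) fun i j hij ↦ (hlt i j hij).2
  exact ⟨fun k ↦ (f k).2, (symm_disjoint.pairwise_on _).mpr fun i j hij ↦ (hlt i j hij).1,
    fun k ↦ ⟨(hf k).1, fun hk ↦ (hf k).2.2 (hB (hid k) hk)⟩⟩

theorem exists_forall_isAbsorbed_mem (hB : Monotone B)
    (hD : ∀ Y ⊆ D, IsAbsorbed B Y ∨ IsAbsorbed B (D \ Y)) :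
    ∃ t, ∀ Y ⊆ D, IsAbsorbed B Y → Y ∈ B t := by
  by_contra! hcon
  obtain ⟨Y, hY, hYB⟩ := exists_disjoint_seq_isAbsorbed hB hcon
  have hodd (k l : ℕ) : Disjoint (Y (2 * k + 1)) (Y (2 * l)) := hY (by omega)
  rcases hD (⋃ k, Y (2 * k)) (iUnion_subset fun k ↦ (hYB _).1) with ⟨t, ht⟩ | ⟨t, ht⟩
  · exact (hYB (2 * t)).2 (hB (by omega) (ht (subset_iUnion (fun k ↦ Y (2 * k)) t)))
  · exact (hYB (2 * t + 1)).2 (hB (by omega) (ht (subset_sdiff.mpr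
      ⟨(hYB _).1, disjoint_iUnion_right.mpr (hodd t)⟩)))

theorem exists_booleanSubalgebra_eq_top (hB : Monotone B) (h : ∀ X, ∃ t, X ∈ B t) :
    ∃ t, B t = ⊤ := by
  by_contra! hcon
  have huniv : ¬ IsAbsorbed B univ := fun ⟨t, ht⟩ ↦
    hcon t (eq_top_iff.mpr fun X _ ↦ ht (subset_univ X))
  obtain ⟨D, hD, hsplit⟩ := exists_not_isAbsorbed_forall_subset hB h huniv
  obtain ⟨s, hs⟩ := h D
  obtain ⟨t, ht⟩ := exists_forall_isAbsorbed_mem hB hsplit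
  refine hD ⟨max s t, fun X hX ↦ ?_⟩
  rcases hsplit X hX with hX' | hX'
  · exact hB (le_max_right s t) (ht X hX hX')
  · rw [← sdiff_sdiff_cancel_left hX]
    exact BooleanSubalgebra.sdiff_mem (hB (le_max_left s t) hs)
      (hB (le_max_right s t) (ht _ sdiff_subset hX'))

end BooleanChain

section Exhaustion

/-- The increasing sequence `H` of subgroups has union the whole group. A group has uncountable
cofinality when every such sequence reaches `⊤`. -/
structure IsExhaustion {Γ : Type*} [Group Γ] (H : ℕ → Subgroup Γ) : Prop where
  monotone : Monotone H
  exists_mem (g : Γ) : ∃ t, g ∈ H t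

theorem IsExhaustion.comap {Γ Δ : Type*} [Group Γ] [Group Δ] {H : ℕ → Subgroup Γ}
    (hH : IsExhaustion H) (φ : Δ →* Γ) : IsExhaustion fun t ↦ (H t).comap φ where
  monotone _ _ hst := Subgroup.comap_mono (hH.monotone hst)
  exists_mem g := hH.exists_mem (φ g)

theorem IsExhaustion.exists_forall_mem {Γ α : Type*} [Group Γ] [Finite α] {H : ℕ → Subgroup Γ}
    (hH : IsExhaustion H) (f : α → Γ) : ∃ t, ∀ a, f a ∈ H t := by
  have := Fintype.ofFinite α
  choose s hs using fun a ↦ hH.exists_mem (f a)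
  exact ⟨Finset.univ.sup s, fun a ↦ hH.monotone (Finset.le_sup (Finset.mem_univ a)) (hs a)⟩

variable {N : Type*} {G : N → Type*} [∀ n, Group (G n)]

open Classical in
theorem mem_of_forall_piecewise_fiber_mem {κ : Type*} (K : Subgroup (∀ n, G n)) (g : ∀ n, G n)
    (f : N → κ) (hf : (range f).Finite) (hK : ∀ k, (f ⁻¹' {k}).piecewise g 1 ∈ K) : g ∈ K := by
  suffices h : ∀ s : Finset κ, (f ⁻¹' s).piecewise g 1 ∈ K by
    have huniv : f ⁻¹' hf.toFinset = univ := by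
      rw [hf.coe_toFinset, preimage_range]
    have hg := h hf.toFinset
    rwa [huniv, piecewise_univ] at hg
  intro s
  induction s using Finset.induction_on with
  | empty =>
    rw [Finset.coe_empty, preimage_empty, piecewise_empty]
    exact K.one_mem
  | insert k s hk ih =>
    have hmul : (f ⁻¹' ↑(insert k s)).piecewise g 1 =
        (f ⁻¹' {k}).piecewise g 1 * (f ⁻¹' s).piecewise g 1 := by
      ext n
      by_cases hn : f n = k <;> by_cases hs : f n ∈ s <;> simp_all [Set.piecewise]
    exact hmul ▸ mul_mem (hK k) ih

/-- The inclusion of the product over the index set `A` into the full product: coordinates outside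
`A` are set to `1`. -/
noncomputable def extendByOne (G : N → Type*) [∀ n, Group (G n)] (A : Set N) :
    (∀ n : A, G n) →* ∀ n, G n :=
  open Classical in
  { toFun := fun g n ↦ if h : n ∈ A then g ⟨n, h⟩ else 1
    map_one' := by ext n; by_cases h : n ∈ A <;> simp [h]
    map_mul' := fun g h ↦ by ext n; by_cases h : n ∈ A <;> simp [h] }

/-- The subgroups induced by the sequence `H` on the product over the index set `A`. -/
noncomputable def restrictTo (H : ℕ → Subgroup (∀ n, G n)) (A : Set N) (t : ℕ) :
    Subgroup (∀ n : A, G n) :=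
  (H t).comap (extendByOne G A)

theorem IsExhaustion.restriction {H : ℕ → Subgroup (∀ n, G n)} (hH : IsExhaustion H) (A : Set N) :
    IsExhaustion (restrictTo H A) :=
  hH.comap (extendByOne G A)

theorem IsExhaustion.exists_eq_top_of_fibers {H : ℕ → Subgroup (∀ n, G n)} {κ : Type*}
    (hH : IsExhaustion H) (f : N → κ) (hf : (range f).Finite)
    (h : ∀ k ∈ range f, ∃ t, restrictTo H (f ⁻¹' {k}) t = ⊤) : ∃ t, H t = ⊤ := by
  classical
  choose! s hs using h
  refine ⟨hf.toFinset.sup s, (Subgroup.eq_top_iff' _).mpr fun g ↦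
    mem_of_forall_piecewise_fiber_mem _ g f hf fun k ↦ ?_⟩
  by_cases hk : k ∈ range f
  · exact hH.monotone (Finset.le_sup (hf.mem_toFinset.mpr hk))
      ((Subgroup.eq_top_iff' _).mp (hs k hk) ((f ⁻¹' {k}).domRestrict g))
  · have hempty : f ⁻¹' {k} = ∅ := preimage_singleton_eq_empty.mpr hk
    rw [hempty, piecewise_empty]
    exact one_mem _

end Exhaustion

section KoppelbergTits

variable {A Γ : Type*} [Group Γ]

theorem mulIndicator_inter_commutatorElement (X Y : Set A) (x y : Γ) :
    (X ∩ Y).mulIndicator (const A ⁅x, y⁆) =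
      ⁅X.mulIndicator (const A x), Y.mulIndicator (const A y)⁆ := by
  ext a
  by_cases hX : a ∈ X <;> by_cases hY : a ∈ Y <;> simp [hX, hY, commutatorElement_def]

theorem mulIndicator_inter_mem (hΓ : commutator Γ = ⊤) (K : Subgroup (A → Γ)) {X Y : Set A}
    (hX : ∀ g, X.mulIndicator (const A g) ∈ K) (hY : ∀ g, Y.mulIndicator (const A g) ∈ K) (g : Γ) :
    (X ∩ Y).mulIndicator (const A g) ∈ K := by
  have hle : commutator Γ ≤
      K.comap ((mulIndicatorHom Γ (X ∩ Y)).comp (Pi.constMonoidHom A Γ)) := by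
    rw [commutator_def, Subgroup.commutator_le]
    intro x _ y _
    change (X ∩ Y).mulIndicator (const A ⁅x, y⁆) ∈ K
    rw [mulIndicator_inter_commutatorElement]
    exact mul_mem (mul_mem (mul_mem (hX x) (hY y)) (inv_mem (hX x))) (inv_mem (hY y))
  exact (hΓ ▸ hle) (Subgroup.mem_top g)

theorem mulIndicator_compl_mem (K : Subgroup (A → Γ)) (hK : ∀ g, const A g ∈ K) {X : Set A}
    (hX : ∀ g, X.mulIndicator (const A g) ∈ K) (g : Γ) : Xᶜ.mulIndicator (const A g) ∈ K :=
  mulIndicator_compl X (const A g) ▸ mul_mem (hK g) (inv_mem (hX g))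

/-- The sets `X` such that `K` contains every function that is constant on `X` and `1` elsewhere. -/
def indicatorAlgebra (hΓ : commutator Γ = ⊤) (K : Subgroup (A → Γ)) (hK : ∀ g, const A g ∈ K) :
    BooleanSubalgebra (Set A) where
  carrier := {X | ∀ g, X.mulIndicator (const A g) ∈ K}
  bot_mem' g := (mulIndicator_empty (const A g)).symm ▸ K.one_mem
  infClosed' _ hX _ hY := mulIndicator_inter_mem hΓ K hX hY
  compl_mem' hX := mulIndicator_compl_mem K hK hX
  supClosed' X hX Y hY := by
    rw [← compl_compl (X ⊔ Y), compl_sup]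
    exact mulIndicator_compl_mem K hK (mulIndicator_inter_mem hΓ K
      (mulIndicator_compl_mem K hK hX) (mulIndicator_compl_mem K hK hY))

/-- The **Koppelberg–Tits theorem**. -/
theorem IsExhaustion.exists_eq_top_of_finite_of_perfect [Finite Γ] (hΓ : commutator Γ = ⊤)
    {H : ℕ → Subgroup (A → Γ)} (hH : IsExhaustion H) : ∃ t, H t = ⊤ := by
  classical
  obtain ⟨s, hs⟩ := hH.exists_forall_mem (const A : Γ → A → Γ)
  have hmono := hH.monotone
  obtain ⟨t, ht⟩ := exists_booleanSubalgebra_eq_top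
    (B := fun t ↦ indicatorAlgebra hΓ (H (s + t)) fun g ↦ hmono (by omega) (hs g))
    (fun _ _ hij _ hX g ↦ hmono (by omega) (hX g)) fun X ↦ by
      obtain ⟨t, ht⟩ := hH.exists_forall_mem fun g : Γ ↦ X.mulIndicator (const A g)
      exact ⟨t, fun g ↦ hmono (by omega) (ht g)⟩
  refine ⟨s + t, (Subgroup.eq_top_iff' _).mpr fun f ↦
    mem_of_forall_piecewise_fiber_mem _ f f (toFinite _) fun g ↦ ?_⟩
  have hg : (f ⁻¹' {g}).piecewise f 1 = (f ⁻¹' {g}).mulIndicator (const A g) := by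
    rw [piecewise_eq_mulIndicator]
    exact mulIndicator_congr fun _ ↦ id
  exact hg ▸ (ht ▸ BooleanSubalgebra.mem_top : f ⁻¹' {g} ∈ indicatorAlgebra hΓ _ _) g

end KoppelbergTits

section BoundedBox

variable {N : Type*} {G : N → Type*} [∀ n, Group (G n)] {H : ℕ → Subgroup (∀ n, G n)}
  {S T : ∀ n, Set (G n)}

/-- The box `∏ n, S n` lies in a single member of the sequence `H`. -/
def IsBoundedBox (H : ℕ → Subgroup (∀ n, G n)) (S : ∀ n, Set (G n)) : Prop :=
  ∃ t, univ.pi S ⊆ H t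

theorem IsBoundedBox.mono (hT : IsBoundedBox H T) (hST : ∀ n, S n ⊆ T n) : IsBoundedBox H S :=
  hT.imp fun _ ht ↦ (pi_mono fun n _ ↦ hST n).trans ht

theorem IsExhaustion.isBoundedBox_singleton (hH : IsExhaustion H) (g : ∀ n, G n) :
    IsBoundedBox H fun n ↦ {g n} := by
  obtain ⟨t, ht⟩ := hH.exists_mem g
  exact ⟨t, by rwa [univ_pi_singleton, singleton_subset_iff]⟩

theorem IsBoundedBox.mul (hH : IsExhaustion H) (hS : IsBoundedBox H S) (hT : IsBoundedBox H T) :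
    IsBoundedBox H fun n ↦ S n * T n := by
  obtain ⟨s, hs⟩ := hS
  obtain ⟨t, ht⟩ := hT
  refine ⟨max s t, fun g hg ↦ ?_⟩
  choose x hx y hy hxy using fun n ↦ Set.mem_mul.mp (hg n (mem_univ n))
  rw [← (funext hxy : x * y = g)]
  exact mul_mem (hH.monotone (le_max_left s t) (hs fun n _ ↦ hx n))
    (hH.monotone (le_max_right s t) (ht fun n _ ↦ hy n))

theorem IsBoundedBox.restriction (hS : IsBoundedBox H S) (h : ∀ n, 1 ∈ S n) (A : Set N) :
    IsBoundedBox (restrictTo H A) fun n ↦ S n := by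
  obtain ⟨t, ht⟩ := hS
  refine ⟨t, fun g hg ↦ ht fun n _ ↦ ?_⟩
  by_cases hn : n ∈ A
  · have hgn : extendByOne G A g n = g ⟨n, hn⟩ := dif_pos hn
    exact hgn ▸ hg ⟨n, hn⟩ (mem_univ _)
  · have hgn : extendByOne G A g n = 1 := dif_neg hn
    exact hgn ▸ h n

end BoundedBox

section Support

variable {ι κ l R : Type*}

/-- The matrix `M` vanishes at all positions outside `E`. -/
def IsSupportedOn [Zero R] (M : Matrix ι κ R) (E : Set (ι × κ)) : Prop :=
  ∀ i j, (i, j) ∉ E → M i j = 0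

theorem IsSupportedOn.mono [Zero R] {M : Matrix ι κ R} {E E' : Set (ι × κ)}
    (hM : IsSupportedOn M E) (hE : E ⊆ E') : IsSupportedOn M E' :=
  fun i j hij ↦ hM i j fun h ↦ hij (hE h)

theorem IsSupportedOn.mul [Fintype κ] [NonUnitalNonAssocSemiring R] {M : Matrix ι κ R}
    {M' : Matrix κ l R} {E : Set (ι × κ)} {E' : Set (κ × l)} {E'' : Set (ι × l)}
    (hM : IsSupportedOn M E) (hM' : IsSupportedOn M' E')
    (h : ∀ ⦃i k j⦄, (i, k) ∈ E → (k, j) ∈ E' → (i, j) ∈ E'') : IsSupportedOn (M * M') E'' := by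
  intro i j hij
  refine Finset.sum_eq_zero fun k _ ↦ ?_
  by_cases hk : (i, k) ∈ E
  · exact mul_eq_zero_of_right _ (hM' k j fun hkj ↦ hij (h hk hkj))
  · exact mul_eq_zero_of_left (hM i k hk) _

theorem IsSupportedOn.add [AddZeroClass R] {M M' : Matrix ι κ R} {E : Set (ι × κ)}
    (hM : IsSupportedOn M E) (hM' : IsSupportedOn M' E) : IsSupportedOn (M + M') E :=
  fun i j hij ↦ by rw [Matrix.add_apply, hM i j hij, hM' i j hij, add_zero]

theorem IsSupportedOn.mul_eq_zero [Fintype κ] [NonUnitalNonAssocSemiring R] {M : Matrix ι κ R}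
    {M' : Matrix κ l R} {S : Set ι} {T T' : Set κ} {U : Set l} (hM : IsSupportedOn M (S ×ˢ T))
    (hM' : IsSupportedOn M' (T' ×ˢ U)) (h : Disjoint T T') : M * M' = 0 :=
  Matrix.ext fun i j ↦ hM.mul hM' (E'' := ∅)
    (fun _ _ _ hk hk' ↦ (disjoint_left.mp h hk.2 hk'.1).elim) i j (notMem_empty _)

theorem exists_isSupportedOn_row_eq [Zero R] {β : κ → ι} (hβ : Injective β) {C : Set l}
    {v : κ → l → R} (hv : ∀ k, ∀ j ∉ C, v k j = 0) :
    ∃ L : Matrix ι l R, IsSupportedOn L (range β ×ˢ C) ∧ ∀ k, L (β k) = v k := by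
  refine ⟨of (extend β v 0), fun i j hij ↦ ?_, hβ.extend_apply v 0⟩
  by_cases hi : i ∈ range β
  · obtain ⟨k, rfl⟩ := hi
    rw [of_apply, hβ.extend_apply]
    exact hv k j fun hj ↦ hij ⟨⟨k, rfl⟩, hj⟩
  · rw [of_apply, extend_apply' _ _ _ hi, Pi.zero_apply, Pi.zero_apply]

variable [Fintype ι] [DecidableEq ι] [CommRing R]

theorem IsSupportedOn.det_one_add_eq_one {M : Matrix ι ι R} {S T : Set ι}
    (hM : IsSupportedOn M (S ×ˢ T)) (h : Disjoint S T) : (1 + M).det = 1 := by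
  classical
  set D : Matrix ι ι R := diagonal (T.indicator 1)
  have hMD : M * D = M := by
    ext i j
    by_cases hj : j ∈ T
    · simp [D, hj]
    · simp [D, hj, hM i j fun hij ↦ hj hij.2]
  have hDM : D * M = 0 := by
    ext i j
    by_cases hi : i ∈ T
    · simp [D, hM i j fun hij ↦ disjoint_left.mp h hij.1 hi]
    · simp [D, hi]
  rw [← hMD, det_one_add_mul_comm, hDM, add_zero, det_one]

/-- The matrices of determinant `1` that agree with the identity matrix at all positions outside
`E`. For `E = S ×ˢ T` with `S` and `T` disjoint this is an elementary abelian block; for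
`E = {p | p.1 < p.2}` it is the unitriangular group. -/
def identityOff (R : Type*) [CommRing R] (E : Set (ι × ι)) : Set (SpecialLinearGroup ι R) :=
  {g | IsSupportedOn ((g : Matrix ι ι R) - 1) E}

theorem identityOff_mono {E E' : Set (ι × ι)} (h : E ⊆ E') :
    identityOff R E ⊆ identityOff R E' :=
  fun _ hg ↦ hg.mono h

theorem eq_one_apply_of_mem_identityOff {E : Set (ι × ι)} {g : SpecialLinearGroup ι R}
    (hg : g ∈ identityOff R E) {i j : ι} (hij : (i, j) ∉ E) :
    (g : Matrix ι ι R) i j = (1 : Matrix ι ι R) i j :=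
  sub_eq_zero.mp (hg i j hij)

theorem one_mem_identityOff (E : Set (ι × ι)) : 1 ∈ identityOff R E :=
  fun i j _ ↦ by simp

theorem exists_mem_identityOff_eq_one_add {S T : Set ι} (h : Disjoint S T) {M : Matrix ι ι R}
    {E : Set (ι × ι)} (hE : E ⊆ S ×ˢ T) (hM : IsSupportedOn M E) :
    ∃ g ∈ identityOff R E, (g : Matrix ι ι R) = 1 + M :=
  ⟨⟨1 + M, (hM.mono hE).det_one_add_eq_one h⟩, by rwa [← add_sub_cancel_left 1 M] at hM, rfl⟩

theorem identityOff_union_subset {S T : Set ι} (h : Disjoint S T) {E E' : Set (ι × ι)}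
    (hE : E ⊆ S ×ˢ T) (hE' : E' ⊆ S ×ˢ T) :
    identityOff R (E ∪ E') ⊆ identityOff R E * identityOff R E' := by
  classical
  intro g hg
  obtain ⟨x, hx, hxM⟩ := exists_mem_identityOff_eq_one_add (R := R) h hE
    (M := of fun i j ↦ if (i, j) ∈ E then (g - 1 : Matrix ι ι R) i j else 0)
    fun i j hij ↦ if_neg hij
  obtain ⟨y, hy, hyM⟩ := exists_mem_identityOff_eq_one_add (R := R) h hE'
    (M := of fun i j ↦ if (i, j) ∈ E then 0 else (g - 1 : Matrix ι ι R) i j) fun i j hij ↦ by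
      by_cases hijE : (i, j) ∈ E
      · exact if_pos hijE
      · exact (if_neg hijE).trans (hg i j fun hor ↦ hor.elim hijE hij)
  refine ⟨x, hx, y, hy, Subtype.ext ?_⟩
  have hzero : (x - 1 : Matrix ι ι R) * (y - 1) = 0 := (hx.mono hE).mul_eq_zero (hy.mono hE') h.symm
  have hsum : (x - 1 : Matrix ι ι R) + (y - 1) = g - 1 := by
    rw [hxM, hyM]
    ext i j
    by_cases hij : (i, j) ∈ E <;> simp [hij]
  calc
    ((x * y : SpecialLinearGroup ι R) : Matrix ι ι R) =
        (x - 1 : Matrix ι ι R) * (y - 1) + ((x - 1) + (y - 1)) + 1 := by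
        rw [Matrix.SpecialLinearGroup.coe_mul]; noncomm_ring
    _ = g := by rw [hzero, hsum, zero_add, sub_add_cancel]

variable {g x : SpecialLinearGroup ι R}

theorem mul_mem_identityOff {E : Set (ι × ι)}
    (h : ∀ ⦃i k j⦄, (i, k) ∈ E → (k, j) ∈ E → (i, j) ∈ E) (hg : g ∈ identityOff R E)
    (hx : x ∈ identityOff R E) : g * x ∈ identityOff R E := by
  have hgx : ((g * x : SpecialLinearGroup ι R) : Matrix ι ι R) - 1 =
      (g - 1 : Matrix ι ι R) * (x - 1) + ((g - 1) + (x - 1)) := by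
    rw [Matrix.SpecialLinearGroup.coe_mul]
    noncomm_ring
  change IsSupportedOn _ E
  rw [hgx]
  exact (IsSupportedOn.mul hg hx h).add (IsSupportedOn.add hg hx)

theorem inv_mem_identityOff {S T : Set ι} (h : Disjoint S T) (hg : g ∈ identityOff R (S ×ˢ T)) :
    g⁻¹ ∈ identityOff R (S ×ˢ T) := by
  obtain ⟨y, hy, hyM⟩ := exists_mem_identityOff_eq_one_add (M := -(g - 1 : Matrix ι ι R)) h
    subset_rfl fun i j hij ↦ by rw [Matrix.neg_apply, hg i j hij, neg_zero]
  have hsq : (g - 1 : Matrix ι ι R) * (g - 1) = 0 := hg.mul_eq_zero hg h.symm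
  have hgy : g * y = 1 := Subtype.ext <| by
    calc
      (g * y : Matrix ι ι R) = 1 - (g - 1 : Matrix ι ι R) * (g - 1) := by rw [hyM]; noncomm_ring
      _ = 1 := by rw [hsq, sub_zero]
  rwa [inv_eq_of_mul_eq_one_right hgy]

theorem conj_mem_identityOff {D E : Set (ι × ι)}
    (hl : ∀ ⦃i k j⦄, (i, k) ∈ D → (k, j) ∈ E → (i, j) ∈ E)
    (hr : ∀ ⦃i k j⦄, (i, k) ∈ E → (k, j) ∈ D → (i, j) ∈ E) (hx : x ∈ identityOff R D)
    (hx' : x⁻¹ ∈ identityOff R D) (hg : g ∈ identityOff R E) : x * g * x⁻¹ ∈ identityOff R E := by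
  have hxg : IsSupportedOn (x * (g - 1) : Matrix ι ι R) E := by
    rw [← sub_add_cancel (x : Matrix ι ι R) 1, Matrix.add_mul, Matrix.one_mul]
    exact (IsSupportedOn.mul hx hg hl).add hg
  have hxgx : IsSupportedOn (x * (g - 1) * x⁻¹.1 : Matrix ι ι R) E := by
    rw [← sub_add_cancel x⁻¹.1 1, Matrix.mul_add, Matrix.mul_one]
    exact (hxg.mul hx' hr).add hxg
  have hsub : (x * (g - 1) * x⁻¹.1 : Matrix ι ι R) = (x * g * x⁻¹).1 - 1 := by
    rw [Matrix.mul_sub, Matrix.sub_mul, Matrix.mul_one, Matrix.SpecialLinearGroup.coe_mul,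
      Matrix.SpecialLinearGroup.coe_mul, ← Matrix.SpecialLinearGroup.coe_mul x x⁻¹, mul_inv_cancel,
      Matrix.SpecialLinearGroup.coe_one]
  rwa [hsub] at hxgx

theorem exists_conj_eq_submatrix {σ : Equiv.Perm ι} (hσ : σ ∈ alternatingGroup ι) :
    ∃ P : SpecialLinearGroup ι R, ∀ g : SpecialLinearGroup ι R,
      ((P * g * P⁻¹ : SpecialLinearGroup ι R) : Matrix ι ι R) =
        (g : Matrix ι ι R).submatrix σ σ := by
  have hdet : (σ.permMatrix R).det = 1 := by
    rw [det_permutation, Equiv.Perm.mem_alternatingGroup.mp hσ, Units.val_one, Int.cast_one]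
  let P : SpecialLinearGroup ι R := ⟨σ.permMatrix R, hdet⟩
  refine ⟨P, fun g ↦ ?_⟩
  have hcomm : (P : Matrix ι ι R) * g = (g : Matrix ι ι R).submatrix σ σ * P := by
    change σ.permMatrix R * g = _ * σ.permMatrix R
    rw [PEquiv.toMatrix_toPEquiv_mul, PEquiv.mul_toMatrix_toPEquiv, submatrix_submatrix]
    simp
  rw [Matrix.SpecialLinearGroup.coe_mul, Matrix.SpecialLinearGroup.coe_mul, hcomm,
    Matrix.mul_assoc, ← Matrix.SpecialLinearGroup.coe_mul, mul_inv_cancel,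
    Matrix.SpecialLinearGroup.coe_one, Matrix.mul_one]

theorem exists_perm_mem_alternatingGroup_comp_eq {κ : Type*} [Finite κ] {x y : κ → ι}
    (hx : Injective x) (hy : Injective y) (h : Nat.card κ + 2 ≤ Nat.card ι) :
    ∃ σ ∈ alternatingGroup ι, σ ∘ x = y := by
  have := alternatingGroup.isMultiplyPretransitive ι
  have := MulAction.isMultiplyPretransitive_of_le (G := alternatingGroup ι) (α := ι)
    (m := Nat.card κ) (n := Nat.card ι - 2) (by omega) (Nat.sub_le _ _)
  have e := (Finite.equivFin κ).symm
  obtain ⟨σ, hσ⟩ := MulAction.exists_smul_eq (alternatingGroup ι)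
    (⟨x ∘ e, hx.comp e.injective⟩ : Fin (Nat.card κ) ↪ ι) ⟨y ∘ e, hy.comp e.injective⟩
  refine ⟨σ, σ.2, e.surjective.injective_comp_right (funext fun i ↦ ?_)⟩
  exact DFunLike.congr_fun hσ i

end Support

section BlockBoxes

theorem exists_perm_mem_alternatingGroup_subset_image {ι : Type*} [Fintype ι] [DecidableEq ι]
    {A C S T : Set ι} (hAC : Disjoint A C) (hST : Disjoint S T) (hS : S.ncard ≤ A.ncard)
    (hT : T.ncard ≤ C.ncard) (h : S.ncard + T.ncard + 2 ≤ Nat.card ι) :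
    ∃ σ ∈ alternatingGroup ι, S ⊆ σ '' A ∧ T ⊆ σ '' C := by
  classical
  have hST_inj : Injective (Sum.elim (Subtype.val : S → ι) (Subtype.val : T → ι)) :=
    Subtype.val_injective.sumElim Subtype.val_injective fun s t ↦ hST.ne_of_mem s.2 t.2
  obtain ⟨f⟩ : Nonempty (S ↪ A) := Embedding.nonempty_of_card_le <| by
    rwa [← Nat.card_eq_fintype_card, ← Nat.card_eq_fintype_card]
  obtain ⟨g⟩ : Nonempty (T ↪ C) := Embedding.nonempty_of_card_le <| by
    rwa [← Nat.card_eq_fintype_card, ← Nat.card_eq_fintype_card]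
  have hfg_inj : Injective (Sum.elim (Subtype.val ∘ f) (Subtype.val ∘ g) : S ⊕ T → ι) :=
    (Subtype.val_injective.comp f.injective).sumElim (Subtype.val_injective.comp g.injective)
      fun s t ↦ hAC.ne_of_mem (f s).2 (g t).2
  obtain ⟨σ, hσ, hcomp⟩ := exists_perm_mem_alternatingGroup_comp_eq hfg_inj hST_inj
    (by rwa [Nat.card_sum])
  exact ⟨σ, hσ, fun s hs ↦ ⟨f ⟨s, hs⟩, (f _).2, congr_fun hcomp (.inl ⟨s, hs⟩)⟩,
    fun t ht ↦ ⟨g ⟨t, ht⟩, (g _).2, congr_fun hcomp (.inr ⟨t, ht⟩)⟩⟩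

theorem exists_forall_ncard_preimage_singleton_le {ι : Type*} [Finite ι] {m e : ℕ}
    (h : Nat.card ι ≤ m * e) : ∃ c : ι → Fin m, ∀ k, (c ⁻¹' {k}).ncard ≤ e := by
  have := Fintype.ofFinite ι
  obtain ⟨f⟩ : Nonempty (ι ↪ Fin m × Fin e) := Embedding.nonempty_of_card_le <| by
    simpa only [Fintype.card_prod, Fintype.card_fin, Nat.card_eq_fintype_card] using h
  refine ⟨fun i ↦ (f i).1, fun k ↦ ?_⟩
  calc
    _ ≤ (univ : Set (Fin e)).ncard := ncard_le_ncard_of_injOn (fun i ↦ (f i).2)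
      (fun _ _ ↦ mem_univ _) fun i hi j hj hij ↦ f.injective (Prod.ext (hi.trans hj.symm) hij)
    _ = e := by rw [ncard_univ, Nat.card_fin]

variable {N : Type*} {ι : N → Type*} [∀ n, Fintype (ι n)] [∀ n, DecidableEq (ι n)]
  {R : N → Type*} [∀ n, CommRing (R n)]
  {H : ℕ → Subgroup (∀ n, SpecialLinearGroup (ι n) (R n))}

theorem IsBoundedBox.identityOff_image (hH : IsExhaustion H) {E E' : ∀ n, Set (ι n × ι n)}
    (hE : IsBoundedBox H fun n ↦ identityOff (R n) (E n)) {σ : ∀ n, Equiv.Perm (ι n)}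
    (hσ : ∀ n, σ n ∈ alternatingGroup (ι n))
    (hE' : ∀ n, E' n ⊆ Prod.map (σ n) (σ n) '' E n) :
    IsBoundedBox H fun n ↦ identityOff (R n) (E' n) := by
  choose P hP using fun n ↦ exists_conj_eq_submatrix (R := R n) (hσ n)
  refine (((hH.isBoundedBox_singleton P⁻¹).mul hH hE).mul hH (hH.isBoundedBox_singleton P)).mono
    fun n g hg ↦ ?_
  have hmem : P n * g * (P n)⁻¹ ∈ identityOff (R n) (E n) := fun i j hij ↦ by
    have hg' := hg (σ n i) (σ n j) fun h ↦ hij <| by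
      obtain ⟨p, hp, hpij⟩ := hE' n h
      obtain ⟨h₁, h₂⟩ := Prod.ext_iff.mp hpij
      rwa [← (σ n).injective h₁, ← (σ n).injective h₂]
    rw [hP, ← submatrix_one_equiv (σ n)]
    exact hg'
  exact mem_mul.mpr ⟨_, mul_mem_mul rfl hmem, P n, rfl, by rw [Pi.inv_apply]; group⟩

theorem IsBoundedBox.identityOff_iUnion (hH : IsExhaustion H) {κ : Type*} [Finite κ]
    {S T : ∀ n, Set (ι n)} (hST : ∀ n, Disjoint (S n) (T n)) {E : κ → ∀ n, Set (ι n × ι n)}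
    (hE : ∀ k n, E k n ⊆ S n ×ˢ T n)
    (h : ∀ k, IsBoundedBox H fun n ↦ identityOff (R n) (E k n)) :
    IsBoundedBox H fun n ↦ identityOff (R n) (⋃ k, E k n) := by
  classical
  have := Fintype.ofFinite κ
  suffices hs : ∀ s : Finset κ, IsBoundedBox H fun n ↦ identityOff (R n) (⋃ k ∈ s, E k n) from
    (hs Finset.univ).mono fun n ↦ identityOff_mono (by simp)
  intro s
  induction s using Finset.induction_on with
  | empty =>
    refine (hH.isBoundedBox_singleton 1).mono fun n g hg ↦ Subtype.ext (sub_eq_zero.mp ?_)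
    ext i j
    exact hg i j (by simp)
  | insert k s _ ih =>
    refine ((h k).mul hH ih).mono fun n ↦ ?_
    rw [Finset.set_biUnion_insert]
    exact identityOff_union_subset (hST n) (hE k n) (iUnion₂_subset fun k _ ↦ hE k n)

theorem IsBoundedBox.identityOff_prod (hH : IsExhaustion H) {m : ℕ} {e : N → ℕ}
    (hm : ∀ n, Nat.card (ι n) ≤ m * e n) (he : ∀ n, 2 * e n + 2 ≤ Nat.card (ι n))
    {A C : ∀ n, Set (ι n)} (hA : ∀ n, e n ≤ (A n).ncard) (hC : ∀ n, e n ≤ (C n).ncard)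
    (hAC : ∀ n, Disjoint (A n) (C n)) (h : IsBoundedBox H fun n ↦ identityOff (R n) (A n ×ˢ C n))
    {S T : ∀ n, Set (ι n)} (hST : ∀ n, Disjoint (S n) (T n)) :
    IsBoundedBox H fun n ↦ identityOff (R n) (S n ×ˢ T n) := by
  choose c hc using fun n ↦ exists_forall_ncard_preimage_singleton_le (hm n)
  have hle (U : ∀ n, Set (ι n)) (n : N) (k : Fin m) : (U n ∩ c n ⁻¹' {k}).ncard ≤ e n :=
    (ncard_le_ncard inter_subset_right).trans (hc n k)
  let E (k : Fin m × Fin m) (n : N) : Set (ι n × ι n) :=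
    (S n ∩ c n ⁻¹' {k.1}) ×ˢ (T n ∩ c n ⁻¹' {k.2})
  refine (IsBoundedBox.identityOff_iUnion hH hST (E := E)
    (fun k n ↦ prod_mono inter_subset_left inter_subset_left) fun k ↦ ?_).mono
      fun n ↦ identityOff_mono fun p hp ↦
        mem_iUnion.mpr ⟨(c n p.1, c n p.2), ⟨hp.1, rfl⟩, hp.2, rfl⟩
  choose σ hσ hSA hTC using fun n ↦ exists_perm_mem_alternatingGroup_subset_image (hAC n)
    ((hST n).mono inter_subset_left inter_subset_left) ((hle S n k.1).trans (hA n))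
    ((hle T n k.2).trans (hC n)) (by have := hle S n k.1; have := hle T n k.2; grind)
  refine h.identityOff_image hH hσ fun n ↦ ?_
  rw [prodMap_image_prod]
  exact prod_mono (hSA n) (hTC n)

end BlockBoxes

section DiagonalArgument

section Selection

variable {ι κ l R : Type*} [DecidableEq ι] [CommRing R]

/-- The matrix whose `k`-th column is the standard basis vector `e (α k)`. Multiplying with it or
with its transpose embeds blocks into, and cuts blocks out of, larger matrices. -/
def selection (R : Type*) [CommRing R] (α : κ → ι) : Matrix ι κ R :=
  (1 : Matrix ι ι R).submatrix id α

theorem isSupportedOn_selection_mul_transpose [Fintype κ] (α β : κ → ι) :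
    IsSupportedOn (selection R α * (selection R β)ᵀ) (range α ×ˢ range β) := by
  refine fun i j hij ↦ Finset.sum_eq_zero fun k _ ↦ ?_
  by_cases hi : i = α k
  · exact mul_eq_zero_of_right _ (one_apply_ne fun hj ↦ hij ⟨⟨k, hi.symm⟩, k, hj.symm⟩)
  · exact mul_eq_zero_of_left (one_apply_ne hi) _

theorem selection_mul_submatrix [Fintype κ] {α : κ → ι} (hα : Injective α) {M : Matrix ι l R}
    (hM : IsSupportedOn M (range α ×ˢ univ)) : selection R α * M.submatrix α id = M := by
  classical
  ext i j
  by_cases hi : i ∈ range α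
  · obtain ⟨k, rfl⟩ := hi
    simp [selection, mul_apply, one_apply, hα.eq_iff]
  · rw [hM i j fun hij ↦ hi hij.1]
    exact Finset.sum_eq_zero fun k _ ↦ mul_eq_zero_of_left (one_apply_ne fun h ↦ hi ⟨k, h.symm⟩) _

variable [Fintype ι]

theorem transpose_selection_mul (α : κ → ι) (M : Matrix ι l R) :
    (selection R α)ᵀ * M = M.submatrix α id := by
  rw [selection, transpose_submatrix, transpose_one]
  exact one_submatrix_mul α (.refl ι) M

theorem transpose_selection_mul_selection {α : κ → ι} [DecidableEq κ] (hα : Injective α) :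
    (selection R α)ᵀ * selection R α = 1 := by
  rw [transpose_selection_mul]
  exact submatrix_one α hα

theorem eq_commutatorElement_of_sub_one_eq_mul {g x y : SpecialLinearGroup ι R}
    (hxg : (x - 1 : Matrix ι ι R) * (g - 1) = 0) (hxx : (x - 1 : Matrix ι ι R) * (x - 1) = 0)
    (hy : (y - 1 : Matrix ι ι R) = (g - 1) * (x - 1)) : y = ⁅g, x⁆ := by
  rw [commutatorElement_def, eq_mul_inv_iff_mul_eq, eq_mul_inv_iff_mul_eq]
  refine Subtype.ext ?_
  obtain ⟨P, hP⟩ : ∃ P : Matrix ι ι R, (g : Matrix ι ι R) = 1 + P := ⟨g - 1, by abel⟩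
  obtain ⟨Q, hQ⟩ : ∃ Q : Matrix ι ι R, (x : Matrix ι ι R) = 1 + Q := ⟨x - 1, by abel⟩
  rw [hP, hQ, add_sub_cancel_left, add_sub_cancel_left] at hy
  rw [hP, hQ, add_sub_cancel_left, add_sub_cancel_left] at hxg
  rw [hQ, add_sub_cancel_left] at hxx
  simp only [Matrix.SpecialLinearGroup.coe_mul, hP, hQ, sub_eq_iff_eq_add.mp hy]
  calc
    (P * Q + 1) * (1 + Q) * (1 + P) =
        (1 + P) * (1 + Q) + (Q * P + P * (Q * Q) + P * (Q * P) + P * (Q * Q) * P) := by noncomm_ring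
    _ = (1 + P) * (1 + Q) := by simp only [hxg, hxx, mul_zero, zero_mul, add_zero]

/- Conjugating by `g j` copies the rows `β ⟨j, ·⟩` to the rows `α j`. As the ranges of the
`β ⟨j, ·⟩` are disjoint, a single `x` can store in these rows the blocks of all the `Y j`. -/
theorem exists_forall_eq_commutatorElement {J : Type*} {κ : J → Type*} [∀ j, Finite (κ j)]
    {α : ∀ j, κ j → ι} {β : (Σ j, κ j) → ι} {C : Set ι} (hα : ∀ j, Injective (α j))
    (hβ : Injective β) (hαβ : ∀ j, Disjoint (range (α j)) (range β))
    (hαC : ∀ j, Disjoint (range (α j)) C) (hβC : Disjoint (range β) C) :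
    ∃ g : J → SpecialLinearGroup ι R, ∀ Y : J → SpecialLinearGroup ι R,
      (∀ j, Y j ∈ identityOff R (range (α j) ×ˢ C)) → ∃ x, ∀ j, Y j = ⁅g j, x⁆ := by
  have := fun j ↦ Fintype.ofFinite (κ j)
  have hαβ' j : Disjoint (range (α j)) (range fun i ↦ β ⟨j, i⟩) :=
    (hαβ j).mono_right (range_comp_subset_range _ _)
  choose g hgE hg using fun j ↦ exists_mem_identityOff_eq_one_add (R := R) (hαβ' j)
    Subset.rfl (isSupportedOn_selection_mul_transpose (α j) fun i ↦ β ⟨j, i⟩)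
  refine ⟨g, fun Y hY ↦ ?_⟩
  obtain ⟨L, hL, hLY⟩ := exists_isSupportedOn_row_eq hβ (C := C)
    (v := fun p ↦ (Y p.1 - 1 : Matrix ι ι R) (α p.1 p.2))
    fun p j hj ↦ hY p.1 _ j fun h ↦ hj h.2
  obtain ⟨x, hx, hxL⟩ := exists_mem_identityOff_eq_one_add hβC Subset.rfl hL
  refine ⟨x, fun j ↦ eq_commutatorElement_of_sub_one_eq_mul
    (hx.mul_eq_zero (hgE j) (hαC j).symm) (hx.mul_eq_zero hx hβC.symm) ?_⟩
  have hrows : L.submatrix (fun i ↦ β ⟨j, i⟩) id = (Y j - 1 : Matrix ι ι R).submatrix (α j) id :=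
    funext fun i ↦ hLY ⟨j, i⟩
  rw [hg, hxL, add_sub_cancel_left, add_sub_cancel_left, Matrix.mul_assoc, transpose_selection_mul,
    hrows, selection_mul_submatrix (hα j) ((hY j).mono (prod_mono_right (subset_univ _)))]

end Selection

variable {N : Type*} {ι : N → Type*} [∀ n, Fintype (ι n)] [∀ n, DecidableEq (ι n)]
  {R : N → Type*} [∀ n, CommRing (R n)]
  {H : ℕ → Subgroup (∀ n, SpecialLinearGroup (ι n) (R n))}

/- If no `j` worked, choose `Y j` in the `j`-th box but outside `H (max j (s j))`, where `g j` lies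
in `H (s j)` and `Y j = ⁅g j, x⁆` for all `j`. Then `x ∈ H t` contradicts the choice of `Y t`. -/
theorem IsExhaustion.exists_isBoundedBox_identityOff_range_prod (hH : IsExhaustion H)
    {κ : N → ℕ → Type*} [∀ n j, Finite (κ n j)] {α : ∀ n j, κ n j → ι n}
    {β : ∀ n, (Σ j, κ n j) → ι n} {C : ∀ n, Set (ι n)} (hα : ∀ n j, Injective (α n j))
    (hβ : ∀ n, Injective (β n)) (hαβ : ∀ n j, Disjoint (range (α n j)) (range (β n)))
    (hαC : ∀ n j, Disjoint (range (α n j)) (C n)) (hβC : ∀ n, Disjoint (range (β n)) (C n)) :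
    ∃ j, IsBoundedBox H fun n ↦ identityOff (R n) (range (α n j) ×ˢ C n) := by
  choose g hg using fun n ↦
    exists_forall_eq_commutatorElement (R := R n) (hα n) (hβ n) (hαβ n) (hαC n) (hβC n)
  choose s hs using fun j ↦ hH.exists_mem fun n ↦ g n j
  by_contra hbdd
  have hnot j : ∃ Y ∈ univ.pi fun n ↦ identityOff (R n) (range (α n j) ×ˢ C n),
      Y ∉ H (max j (s j)) := not_subset.mp (not_exists.mp (not_exists.mp hbdd j) _)
  choose Y hY hYH using hnot
  choose x hx using fun n ↦ hg n (fun j ↦ Y j n) fun j ↦ hY j n (mem_univ n)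
  obtain ⟨t, ht⟩ := hH.exists_mem x
  have hgt := hH.monotone (le_max_right t (s t)) (hs t)
  have hxt := hH.monotone (le_max_left t (s t)) ht
  have hYt : Y t = ⁅fun n ↦ g n t, x⁆ := funext fun n ↦ hx n t
  exact hYH t (hYt ▸ mul_mem (mul_mem (mul_mem hgt hxt) (inv_mem hgt)) (inv_mem hxt))

end DiagonalArgument

section BoundedBlocks

theorem injective_two_pow_blocks (d : ℕ) :
    Injective fun p : Σ j : ℕ, Fin (d / 2 ^ (j + 2)) ↦ d / 2 ^ (p.1 + 2) + p.2 := by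
  have hlt {j k} (hjk : j < k) : 2 * (d / 2 ^ (k + 2)) ≤ d / 2 ^ (j + 2) := by
    have hle : d / 2 ^ (k + 2) ≤ d / 2 ^ (j + 2) / 2 := by
      rw [Nat.div_div_eq_div_mul, ← pow_succ]
      exact Nat.div_le_div_left (Nat.pow_le_pow_right two_pos (by omega)) (by positivity)
    omega
  rintro ⟨j, i⟩ ⟨k, i'⟩ h
  replace h : d / 2 ^ (j + 2) + i = d / 2 ^ (k + 2) + i' := h
  obtain rfl : j = k := by
    by_contra hjk
    rcases lt_or_gt_of_ne hjk with hjk | hjk <;> have := hlt hjk <;> omega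
  exact congr_arg _ (Fin.ext (Nat.add_left_cancel h))

/- The rows `β ⟨j, ·⟩` are the dyadic blocks `[d / 2 ^ (j + 2), 2 * (d / 2 ^ (j + 2)))`, counted
from the end; they lie in the second half, the rows `α j` and the columns `C` in the first. -/
theorem exists_disjoint_blocks (d : ℕ) :
    ∃ (α : ∀ j : ℕ, Fin (d / 2 ^ (j + 2)) → Fin d)
      (β : (Σ j : ℕ, Fin (d / 2 ^ (j + 2))) → Fin d) (C : Set (Fin d)),
      (∀ j, Injective (α j)) ∧ Injective β ∧ (∀ j, Disjoint (range (α j)) (range β)) ∧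
        (∀ j, Disjoint (range (α j)) C) ∧ Disjoint (range β) C ∧ C.ncard = d / 4 := by
  have hle j : d / 2 ^ (j + 2) ≤ d / 4 :=
    Nat.div_le_div_left (Nat.pow_le_pow_right two_pos (Nat.le_add_left 2 j)) (by norm_num)
  refine ⟨fun j i ↦ ⟨i, by have := hle j; omega⟩,
    fun p ↦ Fin.rev ⟨d / 2 ^ (p.1 + 2) + p.2, by have := hle p.1; omega⟩,
    range fun i : Fin (d / 4) ↦ ⟨d / 4 + i, by omega⟩, ?_, ?_, ?_, ?_, ?_, ?_⟩
  · exact fun j i i' h ↦ Fin.ext (Fin.mk.inj h)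
  · exact fun p p' h ↦ injective_two_pow_blocks d (Fin.mk.inj (Fin.rev_injective h))
  · rintro j
    rw [disjoint_range_iff]
    rintro i ⟨k, i'⟩ h
    have h' : (i : ℕ) = d - (d / 2 ^ (k + 2) + i' + 1) := congr_arg Fin.val h
    have := hle j
    have := hle k
    omega
  · rintro j
    rw [disjoint_range_iff]
    rintro i i' h
    have h' := Fin.mk.inj h
    have := hle j
    omega
  · rw [disjoint_range_iff]
    rintro ⟨k, i'⟩ i h
    have h' : d - (d / 2 ^ (k + 2) + i' + 1) = d / 4 + i := congr_arg Fin.val h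
    have := hle k
    omega
  · rw [ncard_range_of_injective fun i i' h ↦ Fin.ext (Nat.add_left_cancel (Fin.mk.inj h)),
      Nat.card_fin]

variable {N : Type*} {R : N → Type*} [∀ n, CommRing (R n)]

/-- For all disjoint blocks `S n` of rows and `T n` of columns, the matrices that agree with the
identity outside these blocks form a bounded box. -/
def HasBoundedBlocks {ι : N → Type*} [∀ n, Fintype (ι n)] [∀ n, DecidableEq (ι n)]
    (H : ℕ → Subgroup (∀ n, SpecialLinearGroup (ι n) (R n))) : Prop :=
  ∀ ⦃S T : ∀ n, Set (ι n)⦄, (∀ n, Disjoint (S n) (T n)) →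
    IsBoundedBox H fun n ↦ identityOff (R n) (S n ×ˢ T n)

theorem IsExhaustion.exists_hasBoundedBlocks_restrictTo {d : N → ℕ}
    {H : ℕ → Subgroup (∀ n, SpecialLinearGroup (Fin (d n)) (R n))} (hH : IsExhaustion H) :
    ∃ D, HasBoundedBlocks (restrictTo H {n | D ≤ d n}) := by
  choose α β C hα hβ hαβ hαC hβC hC using fun n ↦ exists_disjoint_blocks (d n)
  obtain ⟨j, hj⟩ := hH.exists_isBoundedBox_identityOff_range_prod hα hβ hαβ hαC hβC
  refine ⟨2 ^ (j + 2), fun S T hST ↦ ?_⟩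
  have hle n : d n / 2 ^ (j + 2) ≤ d n / 4 :=
    Nat.div_le_div_left (Nat.pow_le_pow_right two_pos (Nat.le_add_left 2 j)) (by norm_num)
  refine (hj.restriction (fun n ↦ one_mem_identityOff _) _).identityOff_prod (hH.restriction _)
    (m := 2 ^ (j + 3)) (e := fun n ↦ d n / 2 ^ (j + 2)) (fun n ↦ ?_) (fun n ↦ ?_) (fun n ↦ ?_)
    (fun n ↦ (hle n).trans_eq (hC n).symm) (fun n ↦ hαC n j) hST
  · have hn : 2 ^ (j + 2) ≤ d n := n.2
    have hpos : 0 < d n / 2 ^ (j + 2) := Nat.div_pos hn (by positivity)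
    rw [Nat.card_fin]
    calc
      (d n : ℕ) ≤ 2 ^ (j + 2) * (d n / 2 ^ (j + 2) + 1) :=
        (Nat.lt_mul_div_succ _ (by positivity)).le
      _ ≤ 2 ^ (j + 2) * (2 * (d n / 2 ^ (j + 2))) := by gcongr; omega
      _ = 2 ^ (j + 3) * (d n / 2 ^ (j + 2)) := by ring
  · have := hle n
    have hn : 2 ^ (j + 2) ≤ d n := n.2
    have := Nat.pow_le_pow_right two_pos (Nat.le_add_left 2 j)
    rw [Nat.card_fin]
    omega
  · rw [ncard_range_of_injective (hα n j), Nat.card_fin]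

end BoundedBlocks

section Corner

theorem one_add_mul_sub_one_mul {ι κ R : Type*} [Fintype ι] [DecidableEq ι] [Fintype κ]
    [DecidableEq κ] [CommRing R] {a : Matrix ι κ R} {b : Matrix κ ι R} (h : b * a = 1)
    (X Y : Matrix κ κ R) :
    (1 + a * (X - 1) * b) * (1 + a * (Y - 1) * b) = 1 + a * (X * Y - 1) * b := by
  have hXY : X * Y - 1 = (X - 1) + (Y - 1) + (X - 1) * (Y - 1) := by noncomm_ring
  have hmul : a * (X - 1) * b * (a * (Y - 1) * b) = a * ((X - 1) * (Y - 1)) * b := by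
    simp only [Matrix.mul_assoc]
    rw [← Matrix.mul_assoc b a, h, Matrix.one_mul]
  simp only [hXY, Matrix.mul_add, Matrix.add_mul, hmul, Matrix.mul_one, Matrix.one_mul]
  abel

variable {ι κ l R : Type*} [Fintype ι] [DecidableEq ι] [Fintype κ] [DecidableEq κ] [Fintype l]
  [DecidableEq l] [CommRing R]

/-- The embedding of special linear groups along an embedding `α` of index types: `g` acts on the
coordinates in the range of `α`, and the other coordinates are fixed. -/
def corner (α : κ ↪ ι) : SpecialLinearGroup κ R →* SpecialLinearGroup ι R where
  toFun g := ⟨1 + selection R α * ((g : Matrix κ κ R) - 1) * (selection R α)ᵀ, by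
    rw [Matrix.mul_assoc, det_one_add_mul_comm, Matrix.mul_assoc,
      transpose_selection_mul_selection α.injective, Matrix.mul_one, add_sub_cancel, g.det_coe]⟩
  map_one' := Subtype.ext (by simp)
  map_mul' g h := Subtype.ext <| (one_add_mul_sub_one_mul
    (transpose_selection_mul_selection α.injective) (g : Matrix κ κ R) (h : Matrix κ κ R)).symm

theorem coe_corner (α : κ ↪ ι) (g : SpecialLinearGroup κ R) :
    (corner α g : Matrix ι ι R) =
      1 + selection R α * ((g : Matrix κ κ R) - 1) * (selection R α)ᵀ :=
  rfl

theorem corner_corner (α : κ ↪ ι) (β : l ↪ κ) (g : SpecialLinearGroup l R) :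
    corner α (corner β g) = corner (β.trans α) g := by
  have h : selection R (β.trans α) = selection R α * selection R β :=
    (mul_submatrix_one (.refl κ) β (selection R α)).symm
  refine Subtype.ext ?_
  simp only [coe_corner, h, transpose_mul, add_sub_cancel_left, Matrix.mul_assoc]

theorem corner_mem_identityOff (α : κ ↪ ι) {E : Set (κ × κ)} {g : SpecialLinearGroup κ R}
    (hg : g ∈ identityOff R E) : corner α g ∈ identityOff R (Prod.map α α '' E) := by
  intro i j hij
  rw [coe_corner, add_sub_cancel_left]
  refine Finset.sum_eq_zero fun k₂ _ ↦ ?_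
  by_cases hj : j = α k₂
  · refine mul_eq_zero_of_left (Finset.sum_eq_zero fun k₁ _ ↦ ?_) _
    by_cases hi : i = α k₁
    · exact mul_eq_zero_of_right _ (hg k₁ k₂ fun hk ↦ hij ⟨_, hk, Prod.ext hi.symm hj.symm⟩)
    · exact mul_eq_zero_of_left (one_apply_ne hi) _
  · exact mul_eq_zero_of_right _ (one_apply_ne hj)

theorem corner_mem_identityOff_range (α : κ ↪ ι) (g : SpecialLinearGroup κ R) :
    corner α g ∈ identityOff R (range α ×ˢ range α) := by
  rw [← range_prodMap, ← image_univ]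
  exact corner_mem_identityOff α fun _ _ hij ↦ (hij trivial).elim

theorem corner_apply_apply (α : κ ↪ ι) (g : SpecialLinearGroup κ R) (i j : κ) :
    (corner α g : Matrix ι ι R) (α i) (α j) = g i j := by
  simp [coe_corner, selection, mul_apply, one_apply]

theorem corner_apply_of_notMem_left {α : κ ↪ ι} (g : SpecialLinearGroup κ R) {i : ι}
    (hi : i ∉ range α) (j : ι) : (corner α g : Matrix ι ι R) i j = (1 : Matrix ι ι R) i j :=
  eq_one_apply_of_mem_identityOff (corner_mem_identityOff_range α g) fun h ↦ hi h.1

theorem corner_apply_of_notMem_right {α : κ ↪ ι} (g : SpecialLinearGroup κ R) (i : ι) {j : ι}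
    (hj : j ∉ range α) : (corner α g : Matrix ι ι R) i j = (1 : Matrix ι ι R) i j :=
  eq_one_apply_of_mem_identityOff (corner_mem_identityOff_range α g) fun h ↦ hj h.2

theorem commute_of_mem_identityOff {S T : Set ι} (h : Disjoint S T)
    {x y : SpecialLinearGroup ι R} (hx : x ∈ identityOff R (S ×ˢ S))
    (hy : y ∈ identityOff R (T ×ˢ T)) : Commute x y := by
  have hxy : Commute (x - 1 : Matrix ι ι R) (y - 1) :=
    (hx.mul_eq_zero hy h).trans (hy.mul_eq_zero hx h.symm).symm
  have hxy' := (hxy.add_left (.one_left _)).add_right (.one_right _)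
  rw [sub_add_cancel, sub_add_cancel] at hxy'
  exact Subtype.ext hxy'

theorem commute_corner {α : κ ↪ ι} {β : l ↪ ι} (h : Disjoint (range α) (range β))
    (x : SpecialLinearGroup κ R) (y : SpecialLinearGroup l R) :
    Commute (corner α x) (corner β y) :=
  commute_of_mem_identityOff h (corner_mem_identityOff_range α x) (corner_mem_identityOff_range β y)

end Corner

section Whitehead

variable {κ l R : Type*} [Fintype κ] [DecidableEq κ] [Fintype l] [DecidableEq l] [CommRing R]

theorem corner_inl_eq_fromBlocks (A : SpecialLinearGroup κ R) :
    (corner (.inl : κ ↪ κ ⊕ l) A : Matrix (κ ⊕ l) (κ ⊕ l) R) = fromBlocks A 0 0 1 := by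
  ext (i | i) (j | j)
  · exact corner_apply_apply (.inl : κ ↪ κ ⊕ l) A i j
  · exact corner_apply_of_notMem_right A _ (by simp)
  · exact corner_apply_of_notMem_left A (by simp) _
  · rw [corner_apply_of_notMem_left A (by simp), ← fromBlocks_one]
    rfl

theorem corner_inr_eq_fromBlocks (A : SpecialLinearGroup l R) :
    (corner (.inr : l ↪ κ ⊕ l) A : Matrix (κ ⊕ l) (κ ⊕ l) R) = fromBlocks 1 0 0 A := by
  ext (i | i) (j | j)
  · rw [corner_apply_of_notMem_left A (by simp), ← fromBlocks_one]
    rfl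
  · exact corner_apply_of_notMem_left A (by simp) _
  · exact corner_apply_of_notMem_right A _ (by simp)
  · exact corner_apply_apply (.inr : l ↪ κ ⊕ l) A i j

theorem exists_mem_identityOff_eq_fromBlocks_upper (X : Matrix κ l R) :
    ∃ g ∈ identityOff R (range (.inl : κ → κ ⊕ l) ×ˢ range (.inr : l → κ ⊕ l)),
      (g : Matrix (κ ⊕ l) (κ ⊕ l) R) = fromBlocks 1 X 0 1 := by
  refine ⟨⟨fromBlocks 1 X 0 1, by simp⟩, ?_, rfl⟩
  rintro (i | i) (j | j) hij <;> simp_all [one_apply]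

theorem exists_mem_identityOff_eq_fromBlocks_lower (X : Matrix l κ R) :
    ∃ g ∈ identityOff R (range (.inr : l → κ ⊕ l) ×ˢ range (.inl : κ → κ ⊕ l)),
      (g : Matrix (κ ⊕ l) (κ ⊕ l) R) = fromBlocks 1 0 X 1 := by
  refine ⟨⟨fromBlocks 1 0 X 1, by simp⟩, ?_, rfl⟩
  rintro (i | i) (j | j) hij <;> simp_all [one_apply]

/-- **Whitehead's lemma**. -/
theorem corner_inl_mul_corner_inr_inv_mem (A : SpecialLinearGroup κ R) :
    corner (.inl : κ ↪ κ ⊕ κ) A * corner (.inr : κ ↪ κ ⊕ κ) A⁻¹ ∈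
      letI U := identityOff R (range (.inl : κ → κ ⊕ κ) ×ˢ range (.inr : κ → κ ⊕ κ))
      letI L := identityOff R (range (.inr : κ → κ ⊕ κ) ×ˢ range (.inl : κ → κ ⊕ κ))
      U * L * U * (U * L * U) := by
  choose u hu hu_eq using exists_mem_identityOff_eq_fromBlocks_upper (κ := κ) (l := κ) (R := R)
  choose v hv hv_eq using exists_mem_identityOff_eq_fromBlocks_lower (κ := κ) (l := κ) (R := R)
  have hA : (A : Matrix κ κ R) * (A⁻¹ : SpecialLinearGroup κ R) = 1 := by
    rw [← Matrix.SpecialLinearGroup.coe_mul, mul_inv_cancel, Matrix.SpecialLinearGroup.coe_one]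
  have hA' : ((A⁻¹ : SpecialLinearGroup κ R) : Matrix κ κ R) * A = 1 := by
    rw [← Matrix.SpecialLinearGroup.coe_mul, inv_mul_cancel, Matrix.SpecialLinearGroup.coe_one]
  have h : corner (.inl : κ ↪ κ ⊕ κ) A * corner (.inr : κ ↪ κ ⊕ κ) A⁻¹ =
      u A * v (-(A⁻¹ : SpecialLinearGroup κ R)) * u A * (u (-1) * v 1 * u (-1)) := Subtype.ext <| by
    simp only [Matrix.SpecialLinearGroup.coe_mul, corner_inl_eq_fromBlocks,
      corner_inr_eq_fromBlocks, hu_eq, hv_eq, fromBlocks_multiply]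
    simp [hA, hA', -Matrix.SpecialLinearGroup.coe_inv]
  rw [h]
  exact mul_mem_mul (mul_mem_mul (mul_mem_mul (hu _) (hv _)) (hu _))
    (mul_mem_mul (mul_mem_mul (hu _) (hv _)) (hu _))

theorem corner_mul_corner_inv_mem {ι : Type*} [Fintype ι] [DecidableEq ι] {α β : κ ↪ ι}
    (h : Disjoint (range α) (range β)) (A : SpecialLinearGroup κ R) :
    corner α A * corner β A⁻¹ ∈
      letI U := identityOff R (range α ×ˢ range β)
      letI L := identityOff R (range β ×ˢ range α)
      U * L * U * (U * L * U) := by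
  let γ : κ ⊕ κ ↪ ι := ⟨Sum.elim α β, α.injective.sumElim β.injective fun i j ↦
    h.ne_of_mem (mem_range_self i) (mem_range_self j)⟩
  have hA := mem_image_of_mem (corner (R := R) γ) (corner_inl_mul_corner_inr_inv_mem A)
  simp only [image_mul, map_mul, corner_corner] at hA
  have hcorner (S T : Set (κ ⊕ κ)) :
      corner γ '' identityOff R (S ×ˢ T) ⊆ identityOff R ((γ '' S) ×ˢ (γ '' T)) := by
    rw [image_subset_iff, ← prodMap_image_prod]
    exact fun _ ↦ corner_mem_identityOff γ
  have hU := hcorner (range .inl) (range .inr)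
  have hL := hcorner (range .inr) (range .inl)
  rw [← range_comp, ← range_comp] at hU hL
  have hUL := mul_subset_mul (mul_subset_mul hU hL) hU
  exact mul_subset_mul hUL hUL hA

variable {N : Type*} {ι κ : N → Type*} [∀ n, Fintype (ι n)] [∀ n, DecidableEq (ι n)]
  [∀ n, Fintype (κ n)] [∀ n, DecidableEq (κ n)] {R : N → Type*} [∀ n, CommRing (R n)]
  {H : ℕ → Subgroup (∀ n, SpecialLinearGroup (ι n) (R n))}

theorem HasBoundedBlocks.isBoundedBox_range_corner_mul_corner_inv (hb : HasBoundedBlocks H)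
    (hH : IsExhaustion H) {α β : ∀ n, κ n ↪ ι n} (h : ∀ n, Disjoint (range (α n)) (range (β n))) :
    IsBoundedBox H fun n ↦
      range fun A : SpecialLinearGroup (κ n) (R n) ↦ corner (α n) A * corner (β n) A⁻¹ := by
  have hU := hb h
  have hUL := (hU.mul hH (hb fun n ↦ (h n).symm)).mul hH hU
  exact (hUL.mul hH hUL).mono fun n ↦ range_subset_iff.mpr (corner_mul_corner_inv_mem (h n))

end Whitehead

section Unitriangular

theorem mem_identityOff_compl_prod_singleton {ι R : Type*} [Fintype ι] [DecidableEq ι] [CommRing R]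
    {a : ι} {g : SpecialLinearGroup ι R} (hg : g ∈ identityOff R (univ ×ˢ {a})) :
    g ∈ identityOff R ({a}ᶜ ×ˢ {a}) := by
  have hcol : (g : Matrix ι ι R) = (1 : Matrix ι ι R).updateCol a fun i ↦ g i a := by
    ext i j
    by_cases hj : j = a
    · rw [hj, updateCol_self]
    · rw [updateCol_ne hj, eq_one_apply_of_mem_identityOff hg fun h ↦ hj h.2]
  have haa : (g : Matrix ι ι R) a a = 1 := by
    have hdet := g.det_coe
    rwa [hcol, ← cramer_apply, cramer_one] at hdet
  intro i j hij
  by_cases hj : j = a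
  · obtain rfl : i = a := by_contra fun hi ↦ hij ⟨hi, hj⟩
    rw [hj, Matrix.sub_apply, haa, one_apply_eq, sub_self]
  · exact hg i j fun h ↦ hj h.2

variable {R : Type*} [CommRing R] {k : ℕ}

theorem mulVec_apply_of_mem_identityOff {u : SpecialLinearGroup (Fin k) R}
    (hu : u ∈ identityOff R {p : Fin k × Fin k | p.1 < p.2}) {v : Fin k → R} {i : Fin k}
    (hv : ∀ l, i < l → v l = 0) : ((u : Matrix (Fin k) (Fin k) R) *ᵥ v) i = v i := by
  have hui l (hl : l ≤ i) := eq_one_apply_of_mem_identityOff hu (i := i) (j := l) hl.not_gt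
  calc
    ∑ l, (u : Matrix (Fin k) (Fin k) R) i l * v l = u i i * v i := by
      refine Finset.sum_eq_single_of_mem i (Finset.mem_univ i) fun l _ hl ↦ ?_
      rcases lt_or_gt_of_ne hl with hl | hl
      · rw [hui l hl.le, one_apply_ne hl.ne', zero_mul]
      · rw [hv l hl, mul_zero]
    _ = v i := by rw [hui i le_rfl, one_apply_eq, one_mul]

/-- The first column of `u`, followed by the iterates of shifting down by one and applying `u`. Its
entries, without the last row, are those of a matrix `g` for which `u * diag(1, g)` and `diag(g, 1)`
agree outside the last column. -/
def shiftedColumn (u : SpecialLinearGroup (Fin (k + 1)) R) : ℕ → Fin (k + 1) → R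
  | 0 => (u : Matrix (Fin (k + 1)) (Fin (k + 1)) R) *ᵥ Pi.single 0 1
  | j + 1 => (u : Matrix (Fin (k + 1)) (Fin (k + 1)) R) *ᵥ
      Fin.cons 0 fun i : Fin k ↦ shiftedColumn u j i.castSucc

variable {u : SpecialLinearGroup (Fin (k + 1)) R}

theorem shiftedColumn_apply (hu : u ∈ identityOff R {p : Fin (k + 1) × Fin (k + 1) | p.1 < p.2})
    {j : ℕ} {i : Fin (k + 1)} (hij : j ≤ i) :
    shiftedColumn u j i = if (i : ℕ) = j then 1 else 0 := by
  induction j generalizing i with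
  | zero =>
    rw [shiftedColumn, mulVec_apply_of_mem_identityOff hu fun l hl ↦
      Pi.single_eq_of_ne (Fin.ne_zero_of_lt hl) 1]
    simp only [Pi.single_apply, Fin.ext_iff, Fin.val_zero]
  | succ j ih =>
    have hcons {l : Fin (k + 1)} (hl : j + 1 ≤ l) :
        (Fin.cons 0 fun i : Fin k ↦ shiftedColumn u j i.castSucc : Fin (k + 1) → R) l =
          if (l : ℕ) = j + 1 then 1 else 0 := by
      cases l using Fin.cases with
      | zero => simp at hl
      | succ l => simpa using ih (i := l.castSucc) (by simpa using hl)
    rw [shiftedColumn, mulVec_apply_of_mem_identityOff hu fun l hl ↦ ?_, hcons hij]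
    rw [hcons (hij.trans hl.le), if_neg (hij.trans_lt hl).ne']

theorem exists_forall_apply_eq_shiftedColumn
    (hu : u ∈ identityOff R {p : Fin (k + 1) × Fin (k + 1) | p.1 < p.2}) :
    ∃ g : SpecialLinearGroup (Fin k) R, ∀ i j, g i j = shiftedColumn u j i.castSucc := by
  have hentry {i j : Fin k} (hij : j ≤ i) := shiftedColumn_apply hu (i := i.castSucc) (j := j) hij
  refine ⟨⟨of fun i j : Fin k ↦ shiftedColumn u j i.castSucc, ?_⟩, fun _ _ ↦ rfl⟩
  rw [det_of_isUpperTriangular fun i j hij ↦ ?_]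
  · exact Finset.prod_eq_one fun i _ ↦ (hentry le_rfl).trans (if_pos rfl)
  · exact (hentry (le_of_lt hij)).trans (if_neg fun h ↦ hij.ne' (Fin.ext h))

theorem mul_corner_succEmb_apply_castSucc
    (hu : u ∈ identityOff R {p : Fin (k + 1) × Fin (k + 1) | p.1 < p.2})
    {g : SpecialLinearGroup (Fin k) R} (hg : ∀ i j, g i j = shiftedColumn u j i.castSucc)
    (i : Fin (k + 1)) (j : Fin k) :
    (u * corner (Fin.succEmb k) g : SpecialLinearGroup (Fin (k + 1)) R) i j.castSucc =
      corner Fin.castSuccEmb g i j.castSucc := by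
  trans shiftedColumn u j i
  · change ((u : Matrix (Fin (k + 1)) (Fin (k + 1)) R) *ᵥ
      fun l ↦ corner (Fin.succEmb k) g l j.castSucc) i = _
    obtain hj | ⟨m, hj⟩ := Fin.eq_zero_or_eq_succ j.castSucc
    · have hj0 : (j : ℕ) = 0 := congrArg Fin.val hj
      rw [hj0, shiftedColumn]
      congr 1
      ext l
      rw [hj, corner_apply_of_notMem_right g l (by simp), Pi.single_apply, one_apply]
    · have hjm : (j : ℕ) = m + 1 := congrArg Fin.val hj
      rw [hjm, shiftedColumn]
      congr 1
      ext l
      rw [hj]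
      cases l using Fin.cases with
      | zero =>
        rw [corner_apply_of_notMem_left g (by simp)]
        rfl
      | succ l => exact (corner_apply_apply (Fin.succEmb k) g l m).trans (hg l m)
  · cases i using Fin.lastCases with
    | cast i => exact ((corner_apply_apply Fin.castSuccEmb g i j).trans (hg i j)).symm
    | last =>
      rw [shiftedColumn_apply hu j.is_lt.le,
        corner_apply_of_notMem_left g (by simp), one_apply_ne (Fin.castSucc_ne_last j).symm]
      exact if_neg j.is_lt.ne'

theorem exists_eq_corner_mul_mul_corner_inv
    (hu : u ∈ identityOff R {p : Fin (k + 1) × Fin (k + 1) | p.1 < p.2}) :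
    ∃ g : SpecialLinearGroup (Fin k) R,
      ∃ τ ∈ identityOff R ({Fin.last k}ᶜ ×ˢ {Fin.last k} : Set (Fin (k + 1) × Fin (k + 1))),
        u = corner Fin.castSuccEmb g * τ * corner (Fin.succEmb k) g⁻¹ := by
  obtain ⟨g, hg⟩ := exists_forall_apply_eq_shiftedColumn hu
  refine ⟨g, (corner Fin.castSuccEmb g)⁻¹ * (u * corner (Fin.succEmb k) g),
    mem_identityOff_compl_prod_singleton fun i j hij ↦ ?_, by simp [mul_assoc]⟩
  obtain ⟨j, rfl⟩ := Fin.exists_castSucc_eq.mpr fun hj ↦ hij ⟨trivial, hj⟩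
  have hcol := congrArg (fun v ↦ ((corner Fin.castSuccEmb g)⁻¹.1 *ᵥ v) i)
    (funext fun l ↦ mul_corner_succEmb_apply_castSucc hu hg l j)
  have hinv : (((corner Fin.castSuccEmb g)⁻¹ * (u * corner (Fin.succEmb k) g) :
      SpecialLinearGroup (Fin (k + 1)) R) : Matrix (Fin (k + 1)) (Fin (k + 1)) R) i j.castSucc =
      ((corner Fin.castSuccEmb g)⁻¹ * corner Fin.castSuccEmb g :
        SpecialLinearGroup (Fin (k + 1)) R) i j.castSucc := hcol
  rw [Matrix.sub_apply, hinv, inv_mul_cancel, Matrix.SpecialLinearGroup.coe_one, sub_self]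

variable {N : Type*} {ι : N → Type*} [∀ n, Fintype (ι n)] [∀ n, DecidableEq (ι n)]
  {R : N → Type*} [∀ n, CommRing (R n)] {H : ℕ → Subgroup (∀ n, SpecialLinearGroup (ι n) (R n))}

theorem HasBoundedBlocks.isBoundedBox_image_corner_unitriangular (hb : HasBoundedBlocks H)
    (hH : IsExhaustion H) {k : N → ℕ} {α : ∀ n, Fin (k n + 1) ↪ ι n} {β : ∀ n, Fin (k n) ↪ ι n}
    (h : ∀ n, Disjoint (range (α n)) (range (β n))) :
    IsBoundedBox H fun n ↦
      corner (α n) '' identityOff (R n) {p : Fin (k n + 1) × Fin (k n + 1) | p.1 < p.2} := by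
  have hcastSucc := hb.isBoundedBox_range_corner_mul_corner_inv hH
    (α := fun n ↦ Fin.castSuccEmb.trans (α n)) (β := β) fun n ↦
      (h n).mono_left (range_comp_subset_range Fin.castSucc (α n))
  have hsucc := hb.isBoundedBox_range_corner_mul_corner_inv hH
    (α := β) (β := fun n ↦ (Fin.succEmb (k n)).trans (α n)) fun n ↦
      (h n).symm.mono_right (range_comp_subset_range Fin.succ (α n))
  have hlast := hb (S := fun n ↦ α n '' {Fin.last (k n)}ᶜ) (T := fun n ↦ α n '' {Fin.last (k n)})
    fun n ↦ disjoint_image_of_injective (α n).injective disjoint_compl_left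
  refine ((hcastSucc.mul hH hlast).mul hH hsucc).mono fun n ↦ ?_
  rintro _ ⟨u, hu, rfl⟩
  obtain ⟨g, τ, hτ, rfl⟩ := exists_eq_corner_mul_mul_corner_inv hu
  have hβ : corner (β n) g⁻¹ * corner (α n) τ * corner (β n) g = corner (α n) τ := by
    rw [← (commute_corner (h n) τ g⁻¹).eq, mul_assoc, ← map_mul, inv_mul_cancel, map_one, mul_one]
  have hτα : corner (α n) τ ∈
      identityOff (R n) ((α n '' {Fin.last (k n)}ᶜ) ×ˢ (α n '' {Fin.last (k n)})) := by
    rw [← prodMap_image_prod]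
    exact corner_mem_identityOff (α n) hτ
  simp only [map_mul, corner_corner]
  convert mul_mem_mul (mul_mem_mul (mem_range_self g) hτα) (mem_range_self g) using 1
  conv_lhs => rw [← hβ]
  simp only [mul_assoc]

end Unitriangular

section UnitriangularFactorization

theorem exists_eq_corner_succEmb_mul {R : Type*} [CommRing R] {n : ℕ}
    {g : SpecialLinearGroup (Fin (n + 1)) R}
    (hg : ∀ i, g i 0 = (1 : Matrix (Fin (n + 1)) (Fin (n + 1)) R) i 0) :
    ∃ D : SpecialLinearGroup (Fin n) R,
      ∃ p ∈ identityOff R ({0} ×ˢ {0}ᶜ : Set (Fin (n + 1) × Fin (n + 1))),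
        g = corner (Fin.succEmb n) D * p := by
  have hdet : ((g : Matrix (Fin (n + 1)) (Fin (n + 1)) R).submatrix Fin.succ Fin.succ).det = 1 := by
    have h := det_succ_column_zero (g : Matrix (Fin (n + 1)) (Fin (n + 1)) R)
    rw [g.det_coe, Fin.sum_univ_succ] at h
    simpa [hg, one_apply] using h.symm
  let D : SpecialLinearGroup (Fin n) R := ⟨_, hdet⟩
  have h0 : (0 : Fin (n + 1)) ∉ range (Fin.succEmb n) := fun ⟨i, hi⟩ ↦ Fin.succ_ne_zero i hi
  have hM : IsSupportedOn (g - corner (Fin.succEmb n) D : Matrix (Fin (n + 1)) (Fin (n + 1)) R)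
      ({0} ×ˢ {0}ᶜ) := by
    intro i j hij
    rw [Matrix.sub_apply, sub_eq_zero]
    cases j using Fin.cases with
    | zero => rw [hg, corner_apply_of_notMem_right D i h0]
    | succ j =>
      cases i using Fin.cases with
      | zero => exact (hij ⟨rfl, Fin.succ_ne_zero j⟩).elim
      | succ i => exact (corner_apply_apply (Fin.succEmb n) D i j).symm
  have hKM := (corner_mem_identityOff_range (Fin.succEmb n) D).mul_eq_zero hM
    (disjoint_singleton_right.mpr h0)
  obtain ⟨p, hp, hpM⟩ := exists_mem_identityOff_eq_one_add disjoint_compl_right subset_rfl hM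
  refine ⟨D, p, hp, Subtype.ext ?_⟩
  rw [Matrix.sub_mul, Matrix.one_mul, sub_eq_zero] at hKM
  rw [Matrix.SpecialLinearGroup.coe_mul, hpM, Matrix.mul_add, hKM, Matrix.mul_one, add_sub_cancel]

section Order

variable {ι κ R : Type*} [Fintype ι] [DecidableEq ι] [Fintype κ] [DecidableEq κ] [CommRing R]
  [Preorder ι] [Preorder κ] {g x : SpecialLinearGroup ι R}

theorem mul_mem_identityOff_lt (hg : g ∈ identityOff R {p | p.1 < p.2})
    (hx : x ∈ identityOff R {p | p.1 < p.2}) : g * x ∈ identityOff R {p | p.1 < p.2} :=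
  mul_mem_identityOff (fun _ _ _ h h' ↦ lt_trans (α := ι) h h') hg hx

theorem mul_mem_identityOff_gt (hg : g ∈ identityOff R {p | p.2 < p.1})
    (hx : x ∈ identityOff R {p | p.2 < p.1}) : g * x ∈ identityOff R {p | p.2 < p.1} :=
  mul_mem_identityOff (fun _ _ _ h h' ↦ gt_trans (α := ι) h h') hg hx

variable {α : κ ↪ ι} {y : SpecialLinearGroup κ R}

theorem corner_mem_identityOff_lt (hα : StrictMono α) (hy : y ∈ identityOff R {p | p.1 < p.2}) :
    corner α y ∈ identityOff R {p | p.1 < p.2} :=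
  identityOff_mono (image_subset_iff.mpr fun _ h ↦ hα h) (corner_mem_identityOff α hy)

theorem corner_mem_identityOff_gt (hα : StrictMono α) (hy : y ∈ identityOff R {p | p.2 < p.1}) :
    corner α y ∈ identityOff R {p | p.2 < p.1} :=
  identityOff_mono (image_subset_iff.mpr fun _ h ↦ hα h) (corner_mem_identityOff α hy)

end Order

section Pivot

variable {ι R F : Type*} [Fintype ι] [DecidableEq ι] [CommRing R] [Field F] {a : ι}

theorem transvection_mem_identityOff {i j : ι} (hij : i ≠ j) (c : R) {E : Set (ι × ι)}
    (h : (i, j) ∈ E) : Matrix.SpecialLinearGroup.transvection hij c ∈ identityOff R E := by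
  intro k m hkm
  rw [Matrix.SpecialLinearGroup.transvection_coe, add_sub_cancel_left]
  exact single_apply_of_ne _ _ _ _ _ fun hk ↦ hkm (by rwa [← hk.1, ← hk.2])

theorem exists_mem_identityOff_mul_apply_self {g : SpecialLinearGroup ι R} (hg : g a a = 1) :
    ∃ q ∈ identityOff R ({a}ᶜ ×ˢ {a}), ∀ i,
      (q * g : SpecialLinearGroup ι R) i a = (1 : Matrix ι ι R) i a := by
  let M : Matrix ι ι R := updateCol 0 a fun i ↦ (1 - g : Matrix ι ι R) i a
  have hMa (i) : M i a = (1 - g : Matrix ι ι R) i a := updateCol_self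
  have hM : IsSupportedOn M ({a}ᶜ ×ˢ {a}) := by
    intro i j hij
    by_cases hj : j = a
    · obtain rfl : i = a := by_contra fun hi ↦ hij ⟨hi, hj⟩
      rw [hj, hMa, Matrix.sub_apply, hg, one_apply_eq, sub_self]
    · exact updateCol_ne hj
  obtain ⟨q, hq, hqM⟩ := exists_mem_identityOff_eq_one_add disjoint_compl_left subset_rfl hM
  refine ⟨q, hq, fun i ↦ ?_⟩
  have hMg : (M * (g : Matrix ι ι R)) i a = (1 - g : Matrix ι ι R) i a := by
    rw [mul_apply, Finset.sum_eq_single a, hMa, hg, mul_one]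
    · exact fun k _ hk ↦ mul_eq_zero_of_left (hM i k fun h ↦ hk h.2) _
    · exact fun ha ↦ (ha (Finset.mem_univ a)).elim
  rw [Matrix.SpecialLinearGroup.coe_mul, hqM, Matrix.add_mul, Matrix.one_mul, Matrix.add_apply, hMg,
    Matrix.sub_apply, add_sub_cancel]

theorem exists_mem_identityOff_mul_apply_eq_one {g : SpecialLinearGroup ι F}
    (hg : g a a = 1 ∨ ∃ j ≠ a, g j a ≠ 0) :
    ∃ p ∈ identityOff F ({a} ×ˢ {a}ᶜ), (p * g : SpecialLinearGroup ι F) a a = 1 := by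
  obtain hg | ⟨j, hj, hg⟩ := hg
  · exact ⟨1, one_mem_identityOff _, by rwa [one_mul]⟩
  · refine ⟨_, transvection_mem_identityOff hj.symm ((1 - g a a) / g j a) ⟨rfl, hj⟩, ?_⟩
    have h := transvection_mul_apply_same a j a ((1 - g a a) / g j a) (g : Matrix ι ι F)
    rw [div_mul_cancel₀ _ hg, add_sub_cancel] at h
    exact h

theorem exists_mem_identityOff_pivot (g : SpecialLinearGroup ι F) (a : ι) :
    ∃ q ∈ identityOff F ({a}ᶜ ×ˢ {a}),
      (g * q : SpecialLinearGroup ι F) a a = 1 ∨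
        ∃ j ≠ a, (g * q : SpecialLinearGroup ι F) j a ≠ 0 := by
  by_cases hg : g a a = 1 ∨ ∃ j ≠ a, g j a ≠ 0
  · exact ⟨1, one_mem_identityOff _, by rwa [mul_one]⟩
  push Not at hg
  obtain ⟨j, hj⟩ : ∃ j, j ≠ a := by
    by_contra! h
    have := subsingleton_of_forall_eq a h
    exact hg.1 ((det_eq_elem_of_subsingleton (g : Matrix ι ι F) a).symm.trans g.det_coe)
  obtain ⟨k, hk⟩ : ∃ k, g j k ≠ 0 := by
    by_contra! h
    exact one_ne_zero (g.det_coe.symm.trans (det_eq_zero_of_row_eq_zero j h))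
  have hka : k ≠ a := fun h ↦ hk (h ▸ hg.2 j hj)
  refine ⟨_, transvection_mem_identityOff hka 1 ⟨hka, rfl⟩, .inr ⟨j, hj, ?_⟩⟩
  have h := mul_transvection_apply_same k a j 1 (g : Matrix ι ι F)
  rw [hg.2 j hj, zero_add, one_mul] at h
  exact ne_of_eq_of_ne h hk

end Pivot

theorem exists_eq_mul_mul_corner_succEmb_mul_mul {F : Type*} [Field F] {n : ℕ}
    (g : SpecialLinearGroup (Fin (n + 1)) F) :
    letI P := identityOff F ({0} ×ˢ {0}ᶜ)
    letI Q := identityOff F ({0}ᶜ ×ˢ {0})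
    ∃ p ∈ P, ∃ q ∈ Q, ∃ D, ∃ p' ∈ P, ∃ q' ∈ Q,
      g = p * q * corner (Fin.succEmb n) D * p' * q' := by
  obtain ⟨q', hq', hgq⟩ := exists_mem_identityOff_pivot g 0
  obtain ⟨p, hp, hpgq⟩ := exists_mem_identityOff_mul_apply_eq_one hgq
  obtain ⟨q, hq, hqpgq⟩ := exists_mem_identityOff_mul_apply_self hpgq
  obtain ⟨D, p', hp', hD⟩ := exists_eq_corner_succEmb_mul hqpgq
  refine ⟨p⁻¹, inv_mem_identityOff disjoint_compl_right hp, q⁻¹,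
    inv_mem_identityOff disjoint_compl_left hq, D, p', hp', q'⁻¹,
    inv_mem_identityOff disjoint_compl_left hq', ?_⟩
  rw [mul_assoc (p⁻¹ * q⁻¹), ← hD]
  group

theorem identityOff_singleton_prod_compl_subset (R : Type*) [CommRing R] (n : ℕ) :
    identityOff R ({0} ×ˢ {0}ᶜ) ⊆ identityOff R {p : Fin (n + 1) × Fin (n + 1) | p.1 < p.2} :=
  identityOff_mono fun p hp ↦ (congrArg (· < p.2) hp.1).mpr (Fin.pos_of_ne_zero hp.2)

theorem identityOff_compl_prod_singleton_subset (R : Type*) [CommRing R] (n : ℕ) :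
    identityOff R ({0}ᶜ ×ˢ {0}) ⊆ identityOff R {p : Fin (n + 1) × Fin (n + 1) | p.2 < p.1} :=
  identityOff_mono fun p hp ↦ (congrArg (· < p.1) hp.2).mpr (Fin.pos_of_ne_zero hp.1)

theorem mem_identityOff_lt_mul_gt_mul_lt_mul_gt {F : Type*} [Field F] {n : ℕ}
    (g : SpecialLinearGroup (Fin n) F) :
    letI U := identityOff F {p : Fin n × Fin n | p.1 < p.2}
    letI L := identityOff F {p : Fin n × Fin n | p.2 < p.1}
    g ∈ U * L * (U * L) := by
  induction n with
  | zero =>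
    exact ⟨1, ⟨1, one_mem_identityOff _, 1, one_mem_identityOff _, mul_one 1⟩,
      1, ⟨1, one_mem_identityOff _, 1, one_mem_identityOff _, mul_one 1⟩, Subsingleton.elim _ _⟩
  | succ n ih =>
    obtain ⟨p, hp, q, hq, D, p', hp', q', hq', rfl⟩ := exists_eq_mul_mul_corner_succEmb_mul_mul g
    obtain ⟨_, ⟨u₁, hu₁, l₁, hl₁, rfl⟩, _, ⟨u₂, hu₂, l₂, hl₂, rfl⟩, rfl⟩ := ih D
    have hsucc : StrictMono (Fin.succEmb n) := fun _ _ ↦ Fin.succ_lt_succ_iff.mpr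
    set K := corner (R := F) (Fin.succEmb n)
    have hcorner (x) : K x ∈ identityOff F ({0}ᶜ ×ˢ {0}ᶜ) :=
      Fin.range_succ n ▸ corner_mem_identityOff_range (Fin.succEmb n) x
    have hmove : p * q * K (u₁ * l₁ * (u₂ * l₂)) * p' * q' =
        p * K u₁ * (K u₁⁻¹ * q * (K u₁⁻¹)⁻¹ * K l₁) *
          (K u₂ * (K l₂ * p' * (K l₂)⁻¹) * (K l₂ * q')) := by
      simp only [map_mul, map_inv]
      group
    rw [hmove]
    refine mul_mem_mul (mul_mem_mul ?_ ?_) (mul_mem_mul ?_ ?_)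
    · exact mul_mem_identityOff_lt
        (identityOff_singleton_prod_compl_subset F n hp) (corner_mem_identityOff_lt hsucc hu₁)
    · refine mul_mem_identityOff_gt
        (identityOff_compl_prod_singleton_subset F n ?_) (corner_mem_identityOff_gt hsucc hl₁)
      refine conj_mem_identityOff ?_ ?_ (hcorner _) (map_inv K _ ▸ hcorner _) hq
      all_goals grind
    · refine mul_mem_identityOff_lt (corner_mem_identityOff_lt hsucc hu₂)
        (identityOff_singleton_prod_compl_subset F n ?_)
      refine conj_mem_identityOff ?_ ?_ (hcorner _) (map_inv K _ ▸ hcorner _) hp'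
      all_goals grind
    · exact mul_mem_identityOff_gt (corner_mem_identityOff_gt hsucc hl₂)
        (identityOff_compl_prod_singleton_subset F n hq')

end UnitriangularFactorization

section BlockTriangular

theorem mul_mul_eq_one_add_of_sub_one_mul_eq_zero {A : Type*} [Ring A] {a b p : A}
    (hbp : (b - 1) * (p - 1) = 0) (hba : (b - 1) * (a - 1) = 0) (hpa : (p - 1) * (a - 1) = 0) :
    b * p * a = 1 + (p - 1) + (a - 1) + (b - 1) := by
  have h : b * p * a = (b - 1) * (p - 1) * a + (b - 1) * (a - 1) + (p - 1) * (a - 1) +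
      (1 + (p - 1) + (a - 1) + (b - 1)) := by noncomm_ring
  rw [h, hbp, hba, hpa, zero_mul, add_zero, add_zero, zero_add]

variable {ι κ l R : Type*} [Fintype ι] [DecidableEq ι] [Fintype κ] [DecidableEq κ] [Fintype l]
  [DecidableEq l] [CommRing R]

theorem identityOff_image_subset_image_corner (φ : κ ≃ ι) (E : Set (κ × κ)) :
    identityOff R (Prod.map φ φ '' E) ⊆ corner φ.toEmbedding '' identityOff R E := by
  intro g hg
  refine ⟨corner φ.symm.toEmbedding g,
    identityOff_mono ?_ (corner_mem_identityOff φ.symm.toEmbedding hg), ?_⟩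
  · rintro _ ⟨_, ⟨p, hp, rfl⟩, rfl⟩
    simpa only [Prod.map, Equiv.coe_toEmbedding, Equiv.symm_apply_apply] using hp
  · rw [corner_corner]
    ext i j
    have h := corner_apply_apply (φ.symm.toEmbedding.trans φ.toEmbedding) g i j
    simpa using h

theorem exists_mem_identityOff_lt_eq_submatrix [LinearOrder κ] [Preorder ι] {α : κ → ι}
    (hα : StrictMono α) {u : SpecialLinearGroup ι R} (hu : u ∈ identityOff R {p | p.1 < p.2}) :
    ∃ A ∈ identityOff R {p : κ × κ | p.1 < p.2}, ∀ i j, A i j = u (α i) (α j) := by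
  let M := Matrix.of fun i j ↦ u (α i) (α j)
  have hM {i j} (hij : ¬ i < j) : M i j = (1 : Matrix κ κ R) i j := by
    refine (eq_one_apply_of_mem_identityOff hu fun h ↦ hij (hα.lt_iff_lt.mp h)).trans ?_
    simp only [one_apply, hα.injective.eq_iff]
  have hdet : M.det = 1 := by
    have htri : M.IsUpperTriangular := fun i j hij ↦
      (hM hij.le.not_gt).trans (one_apply_ne (ne_of_gt hij))
    rw [det_of_isUpperTriangular htri]
    exact Finset.prod_eq_one fun i _ ↦ (hM (lt_irrefl i)).trans (one_apply_eq i)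
  exact ⟨⟨M, hdet⟩, fun i j hij ↦ sub_eq_zero.mpr (hM hij), fun _ _ ↦ rfl⟩

theorem identityOff_lt_subset_image_corner_mul_mul_image_corner [LinearOrder κ] [LinearOrder l]
    [Preorder ι] {α : κ ↪ ι} {β : l ↪ ι} (hα : StrictMono α) (hβ : StrictMono β)
    (hαβ : ∀ i j, α i < β j) (h : range α ∪ range β = univ) :
    identityOff R {p : ι × ι | p.1 < p.2} ⊆
      corner β '' identityOff R {p | p.1 < p.2} * identityOff R (range α ×ˢ range β) *
        corner α '' identityOff R {p | p.1 < p.2} := by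
  intro u hu
  obtain ⟨A, hA, hAu⟩ := exists_mem_identityOff_lt_eq_submatrix hα hu
  obtain ⟨B, hB, hBu⟩ := exists_mem_identityOff_lt_eq_submatrix hβ hu
  have hdisj : Disjoint (range α) (range β) := by
    rw [disjoint_range_iff]
    exact fun i j ↦ (hαβ i j).ne
  have ha := corner_mem_identityOff_range α A
  have hb := corner_mem_identityOff_range β B
  have hα' (j) : α j ∉ range β := hdisj.notMem_of_mem_left (mem_range_self j)
  have hβ' (j) : β j ∉ range α := hdisj.notMem_of_mem_right (mem_range_self j)
  obtain ⟨p, hp, hpX⟩ : ∃ p ∈ identityOff R (range α ×ˢ range β),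
      (p : Matrix ι ι R) = 1 + ((u - 1) - (corner α A - 1) - (corner β B - 1)) := by
    refine exists_mem_identityOff_eq_one_add hdisj subset_rfl fun i j hij ↦ ?_
    have hi : i ∈ range α ∪ range β := h ▸ mem_univ i
    have hj : j ∈ range α ∪ range β := h ▸ mem_univ j
    simp only [Matrix.sub_apply]
    rcases hi with ⟨i, rfl⟩ | ⟨i, rfl⟩ <;> rcases hj with ⟨j, rfl⟩ | ⟨j, rfl⟩
    · rw [corner_apply_apply, hAu, corner_apply_of_notMem_left B (hα' i)]
      ring
    · exact (hij ⟨mem_range_self i, mem_range_self j⟩).elim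
    · rw [corner_apply_of_notMem_left A (hβ' i), corner_apply_of_notMem_right B _ (hα' j),
        eq_one_apply_of_mem_identityOff hu (hαβ j i).not_gt]
      ring
    · rw [corner_apply_apply, hBu, corner_apply_of_notMem_left A (hβ' i)]
      ring
  refine ⟨_, ⟨_, mem_image_of_mem _ hB, p, hp, rfl⟩, _, mem_image_of_mem _ hA, Subtype.ext ?_⟩
  have hbp := hb.mul_eq_zero hp hdisj.symm
  have hba := hb.mul_eq_zero ha hdisj.symm
  have hpa := hp.mul_eq_zero ha hdisj.symm
  have hu_eq : (u : Matrix ι ι R) = 1 + (p - 1) + (corner α A - 1) + (corner β B - 1) := by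
    rw [hpX]
    abel
  exact (mul_mul_eq_one_add_of_sub_one_mul_eq_zero hbp hba hpa).trans hu_eq.symm

variable {N : Type*} {ι : N → Type*} [∀ n, Fintype (ι n)] [∀ n, DecidableEq (ι n)]
  {R : N → Type*} [∀ n, CommRing (R n)] {H : ℕ → Subgroup (∀ n, SpecialLinearGroup (ι n) (R n))}

theorem HasBoundedBlocks.isBoundedBox_identityOff_lt (hb : HasBoundedBlocks H)
    (hH : IsExhaustion H) {j k : N → ℕ} (hjk : ∀ n, j n ≤ k n + 1) (hkj : ∀ n, k n ≤ j n + 1)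
    (φ : ∀ n, Fin (j n + 1 + (k n + 1)) ≃ ι n) :
    IsBoundedBox H fun n ↦ identityOff (R n) (Prod.map (φ n) (φ n) '' {p | p.1 < p.2}) := by
  let α n : Fin (j n + 1) ↪ ι n := (Fin.castAddEmb (k n + 1)).trans (φ n).toEmbedding
  let β n : Fin (k n + 1) ↪ ι n := (Fin.natAddEmb (j n + 1)).trans (φ n).toEmbedding
  have hlt n (i : Fin (j n + 1)) (i' : Fin (k n + 1)) :
      Fin.castAdd (k n + 1) i < Fin.natAdd (j n + 1) i' :=
    i.is_lt.trans_le (Nat.le_add_right _ _)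
  have hαβ n : Disjoint (range (α n)) (range (β n)) := by
    rw [disjoint_range_iff]
    exact fun i i' h ↦ (hlt n i i').ne ((φ n).injective h)
  have hα := hb.isBoundedBox_image_corner_unitriangular hH (α := α)
    (β := fun n ↦ (Fin.castLEEmb (hjk n)).trans (β n)) fun n ↦
      (hαβ n).mono_right (range_comp_subset_range _ (β n))
  have hβ := hb.isBoundedBox_image_corner_unitriangular hH (α := β)
    (β := fun n ↦ (Fin.castLEEmb (hkj n)).trans (α n)) fun n ↦
      (hαβ n).symm.mono_right (range_comp_subset_range _ (α n))
  refine ((hβ.mul hH (hb hαβ)).mul hH hα).mono fun n ↦ ?_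
  have hsplit := identityOff_lt_subset_image_corner_mul_mul_image_corner (R := R n)
    (α := Fin.castAddEmb (k n + 1)) (β := Fin.natAddEmb (j n + 1))
    (Fin.strictMono_castAdd _) (Fin.strictMono_natAdd _) (hlt n)
    (eq_univ_of_forall fun i ↦ i.addCases (fun i ↦ .inl (mem_range_self i))
      fun i ↦ .inr (mem_range_self i))
  refine (identityOff_image_subset_image_corner (φ n) _).trans ((image_mono hsplit).trans ?_)
  simp only [image_mul, image_image, corner_corner]
  refine mul_subset_mul_right (mul_subset_mul_left ?_)
  rintro _ ⟨p, hp, rfl⟩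
  refine identityOff_mono ?_ (corner_mem_identityOff _ hp)
  rw [prodMap_image_prod, ← range_comp, ← range_comp]
  rfl

end BlockTriangular

theorem HasBoundedBlocks.exists_eq_top {N : Type*} {d : N → ℕ} {F : N → Type*} [∀ n, Field (F n)]
    {H : ℕ → Subgroup (∀ n, SpecialLinearGroup (Fin (d n)) (F n))} (hb : HasBoundedBlocks H)
    (hH : IsExhaustion H) (hd : ∀ n, 2 ≤ d n) : ∃ t, H t = ⊤ := by
  have hcard n : (d n - 1) / 2 + 1 + ((d n - 2) / 2 + 1) = d n := by
    have := hd n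
    omega
  have hbdd (φ : ∀ n, Fin ((d n - 1) / 2 + 1 + ((d n - 2) / 2 + 1)) ≃ Fin (d n)) :=
    hb.isBoundedBox_identityOff_lt hH (fun n ↦ by omega) (fun n ↦ by omega) φ
  have hU : IsBoundedBox H fun n ↦ identityOff (F n) {p : Fin (d n) × Fin (d n) | p.1 < p.2} :=
    (hbdd fun n ↦ finCongr (hcard n)).mono fun n ↦ identityOff_mono fun p hp ↦
      ⟨(Fin.cast (hcard n).symm p.1, Fin.cast (hcard n).symm p.2), hp, rfl⟩
  have hL : IsBoundedBox H fun n ↦ identityOff (F n) {p : Fin (d n) × Fin (d n) | p.2 < p.1} :=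
    (hbdd fun n ↦ Fin.revPerm.trans (finCongr (hcard n))).mono fun n ↦ identityOff_mono fun p hp ↦
      ⟨(Fin.rev (Fin.cast (hcard n).symm p.1), Fin.rev (Fin.cast (hcard n).symm p.2)),
        Fin.rev_lt_rev.mpr hp, by simp [Prod.map]⟩
  obtain ⟨t, ht⟩ := (hU.mul hH hL).mul hH (hU.mul hH hL)
  exact ⟨t, (Subgroup.eq_top_iff' _).mpr fun g ↦ ht fun n _ ↦
    mem_identityOff_lt_mul_gt_mul_lt_mul_gt (g n)⟩

theorem IsExhaustion.exists_restrictTo_le_eq_top {N : Type*} {d : N → ℕ} {F : N → Type*}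
    [∀ n, Field (F n)] {H : ℕ → Subgroup (∀ n, SpecialLinearGroup (Fin (d n)) (F n))}
    (hH : IsExhaustion H) (hd : ∀ n, 2 ≤ d n) : ∃ D t, restrictTo H {n | D ≤ d n} t = ⊤ := by
  obtain ⟨D, hD⟩ := hH.exists_hasBoundedBlocks_restrictTo
  exact ⟨D, hD.exists_eq_top (hH.restriction _) fun n ↦ hd n⟩

section Perfect

variable {ι R F : Type*} [Fintype ι] [DecidableEq ι] [CommRing R] [Field F]

theorem corner_transvection {κ : Type*} [Fintype κ] [DecidableEq κ] (α : κ ↪ ι) {i j : κ}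
    (h : i ≠ j) (c : R) :
    corner α (Matrix.SpecialLinearGroup.transvection h c) =
      Matrix.SpecialLinearGroup.transvection (α.injective.ne h) c := by
  ext a b
  by_cases ha : a ∈ range α
  · by_cases hb : b ∈ range α
    · obtain ⟨a, rfl⟩ := ha
      obtain ⟨b, rfl⟩ := hb
      simp [corner_apply_apply, Matrix.SpecialLinearGroup.transvection_coe, one_apply, single_apply]
    · have hbj : α j ≠ b := fun h ↦ hb ⟨j, h⟩
      simp [corner_apply_of_notMem_right, hb, Matrix.SpecialLinearGroup.transvection_coe, hbj]
  · have hai : α i ≠ a := fun h ↦ ha ⟨i, h⟩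
    simp [corner_apply_of_notMem_left, ha, Matrix.SpecialLinearGroup.transvection_coe, hai]

theorem diag2n_eq_corner_diag2 {i j : ι} (hij : i ≠ j) {c : F} (hc : c ≠ 0) :
    Matrix.SpecialLinearGroup.diag2n hij c hc =
      corner ⟨![i, j], injective_pair_iff_ne.mpr hij⟩ (Matrix.SpecialLinearGroup.diag2 c hc) := by
  ext a b
  by_cases ha : a ∈ range ![i, j]
  · by_cases hb : b ∈ range ![i, j]
    · obtain ⟨a, rfl⟩ := ha
      obtain ⟨b, rfl⟩ := hb
      refine Eq.trans ?_ (corner_apply_apply _ _ a b).symm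
      fin_cases a <;> fin_cases b <;>
        simp [Matrix.SpecialLinearGroup.diag2n_coe, hij, hij.symm]
    · have hab : a ≠ b := fun h ↦ hb (h ▸ ha)
      rw [corner_apply_of_notMem_right _ _ hb, Matrix.SpecialLinearGroup.diag2n_coe,
        diagonal_apply_ne _ hab, one_apply_ne hab]
  · rw [corner_apply_of_notMem_left _ ha, Matrix.SpecialLinearGroup.diag2n_coe]
    have hai : a ≠ i := fun h ↦ ha ⟨0, h.symm⟩
    have haj : a ≠ j := fun h ↦ ha ⟨1, h.symm⟩
    rw [diagonal_apply, if_neg hai, if_neg haj, one_apply]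

theorem eq_top_of_transvection_mem [Nontrivial ι] {K : Subgroup (SpecialLinearGroup ι F)}
    (hK : ∀ (i j : ι) (h : i ≠ j) (c : F), Matrix.SpecialLinearGroup.transvection h c ∈ K) :
    K = ⊤ := by
  refine (Subgroup.eq_top_iff' K).mpr fun g ↦
    Matrix.SpecialLinearGroup.diagonal_transvection_induction' (· ∈ K) g
      (fun i j hij c hc ↦ ?_) hK fun _ _ ↦ mul_mem
  rw [diag2n_eq_corner_diag2]
  let α : Fin 2 ↪ ι := ⟨![i, j], injective_pair_iff_ne.mpr hij⟩
  exact SL2.transvection_induction (· ∈ K.comap (corner α))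
    (fun i j h c ↦ Subgroup.mem_comap.mpr (corner_transvection α h c ▸ hK _ _ _ c))
    (fun _ _ ↦ mul_mem) _

theorem transvection_eq_commutatorElement {i j k : ι} (hij : i ≠ j) (hik : i ≠ k) (hkj : k ≠ j)
    (c : R) :
    Matrix.SpecialLinearGroup.transvection hij c =
      ⁅Matrix.SpecialLinearGroup.transvection hik c,
        Matrix.SpecialLinearGroup.transvection hkj 1⁆ := by
  apply eq_commutatorElement_of_sub_one_eq_mul <;>
    simp only [Matrix.SpecialLinearGroup.transvection_coe, add_sub_cancel_left]
  · exact single_mul_single_of_ne _ _ _ _ hij.symm _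
  · exact single_mul_single_of_ne _ _ _ _ hkj.symm _
  · rw [single_mul_single_same, mul_one]

theorem commutator_specialLinearGroup_eq_top_of_two_lt (h : 2 < Fintype.card ι) :
    commutator (SpecialLinearGroup ι F) = ⊤ := by
  have : Nontrivial ι := Fintype.one_lt_card_iff_nontrivial.mp (by omega)
  refine eq_top_of_transvection_mem fun i j hij c ↦ ?_
  obtain ⟨k, hk⟩ := Finset.exists_mem_notMem_of_card_lt_card
    (Finset.card_le_two.trans_lt h : ({i, j} : Finset ι).card < Finset.univ.card)
  simp only [Finset.mem_insert, Finset.mem_singleton, not_or] at hk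
  rw [transvection_eq_commutatorElement hij (Ne.symm hk.2.1) hk.2.2]
  exact Subgroup.commutator_mem_commutator (Subgroup.mem_top _) (Subgroup.mem_top _)

theorem commutator_specialLinearGroup_eq_top [Fintype F] {d : ℕ} (hd : 2 ≤ d)
    (hF : d = 2 → 3 < Fintype.card F) : commutator (SpecialLinearGroup (Fin d) F) = ⊤ := by
  classical
  rcases hd.lt_or_eq with hd | rfl
  · exact commutator_specialLinearGroup_eq_top_of_two_lt (by rwa [Fintype.card_fin])
  · obtain ⟨a, -, ha⟩ := Finset.exists_mem_notMem_of_card_lt_card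
      (Finset.card_le_three.trans_lt (hF rfl) : ({0, 1, -1} : Finset F).card < Finset.univ.card)
    simp only [Finset.mem_insert, Finset.mem_singleton, not_or] at ha
    exact SL2.commutator_eq_top ha.1 fun h ↦
      (sq_eq_one_iff.mp h).elim ha.2.1 ha.2.2

end Perfect

section Fibers

theorem exists_infinite_strictMonoOn_of_infinite_image {f : ℕ → ℕ} {s : Set ℕ}
    (h : (f '' s).Infinite) : ∃ I ⊆ s, I.Infinite ∧ StrictMonoOn f I := by
  obtain ⟨φ, hφ, hlt⟩ := exists_seq_of_forall_finset_exists (· ∈ s) (fun m n ↦ m < n ∧ f m < f n)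
    fun t _ ↦ by
      obtain ⟨_, ⟨⟨n, hn, rfl⟩, hnt⟩, hft⟩ :=
        (h.sdiff ((finite_Iic (t.sup id)).image f)).exists_gt (t.sup f)
      refine ⟨n, hn, fun m hm ↦ ⟨?_, (Finset.le_sup hm).trans_lt hft⟩⟩
      exact (Finset.le_sup (f := id) hm).trans_lt (not_le.mp fun hle ↦ hnt ⟨n, hle, rfl⟩)
  have hφmono : StrictMono φ := fun m n hmn ↦ (hlt m n hmn).1
  refine ⟨range φ, range_subset_iff.mpr hφ, infinite_range_of_injective hφmono.injective, ?_⟩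
  rintro _ ⟨m, rfl⟩ _ ⟨n, rfl⟩ hmn
  exact (hlt m n (hφmono.lt_iff_lt.mp hmn)).2

theorem nonempty_specialLinearGroup_mulEquiv {F K : Type*} [Field F] [Fintype F] [Field K]
    [Fintype K] {d e : ℕ} (hde : d = e) (h : Fintype.card F = Fintype.card K) :
    Nonempty (SpecialLinearGroup (Fin d) F ≃* SpecialLinearGroup (Fin e) K) := by
  subst hde
  let φ : F ≃+* K := FiniteField.ringEquivOfCardEq h
  refine ⟨MonoidHom.toMulEquiv (Matrix.SpecialLinearGroup.map φ.toRingHom)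
    (Matrix.SpecialLinearGroup.map φ.symm.toRingHom) ?_ ?_⟩ <;> ext <;> simp

variable {N : Type*}

theorem IsExhaustion.exists_eq_top_of_mulEquiv_of_perfect {Γ : Type*} [Group Γ] [Finite Γ]
    (hΓ : commutator Γ = ⊤) {G : N → Type*} [∀ n, Group (G n)] (e : ∀ n, Γ ≃* G n)
    {H : ℕ → Subgroup (∀ n, G n)} (hH : IsExhaustion H) : ∃ t, H t = ⊤ := by
  let φ := MulEquiv.piCongrRight e
  obtain ⟨t, ht⟩ := (hH.comap φ.toMonoidHom).exists_eq_top_of_finite_of_perfect hΓ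
  exact ⟨t, Subgroup.comap_injective φ.surjective ht⟩

variable {d : N → ℕ} {F : N → Type*} [∀ n, Field (F n)] [∀ n, Fintype (F n)]

theorem IsExhaustion.exists_restrictTo_eq_top_of_perfect
    (hperf : ∀ n, commutator (SpecialLinearGroup (Fin (d n)) (F n)) = ⊤)
    {H : ℕ → Subgroup (∀ n, SpecialLinearGroup (Fin (d n)) (F n))} (hH : IsExhaustion H) (n₀ : N) :
    ∃ t, restrictTo H {n | d n = d n₀ ∧ Fintype.card (F n) = Fintype.card (F n₀)} t = ⊤ := by
  have e (n : {n | d n = d n₀ ∧ Fintype.card (F n) = Fintype.card (F n₀)}) :=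
    nonempty_specialLinearGroup_mulEquiv n.2.1.symm n.2.2.symm
  exact (hH.restriction _).exists_eq_top_of_mulEquiv_of_perfect (hperf n₀) fun n ↦ (e n).some

theorem stmt_11_general (hd : ∀ n, 2 ≤ d n) (hF : ∀ n, d n = 2 → 3 < Fintype.card (F n))
    (hcard : ∀ d₀, ((fun n ↦ Fintype.card (F n)) '' {n | d n = d₀}).Finite)
    {H : ℕ → Subgroup (∀ n, SpecialLinearGroup (Fin (d n)) (F n))} (hH : IsExhaustion H) :
    ∃ t, H t = ⊤ := by
  obtain ⟨D, hD⟩ := hH.exists_restrictTo_le_eq_top hd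
  let label n : Option (ℕ × ℕ) := if D ≤ d n then none else some (d n, Fintype.card (F n))
  have hlabel : (range label).Finite := by
    have hfin := (finite_Iio D).biUnion fun d₀ _ ↦ (hcard d₀).image fun q ↦ some (d₀, q)
    refine (hfin.insert none).subset (range_subset_iff.mpr fun n ↦ ?_)
    by_cases hn : D ≤ d n
    · exact .inl (if_pos hn)
    · refine .inr (mem_biUnion (not_le.mp hn) ⟨_, ⟨n, rfl, rfl⟩, (if_neg hn).symm⟩)
  refine hH.exists_eq_top_of_fibers label hlabel ?_
  rintro _ ⟨n₀, rfl⟩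
  by_cases hn₀ : D ≤ d n₀
  · have hfiber : label ⁻¹' {label n₀} = {n | D ≤ d n} := by
      ext n
      simp [label, hn₀]
    exact hfiber ▸ hD
  · have hfiber : label ⁻¹' {label n₀} =
        {n | d n = d n₀ ∧ Fintype.card (F n) = Fintype.card (F n₀)} := by
      ext n
      simp only [label, if_neg hn₀, mem_preimage, mem_singleton_iff, mem_ofPred_eq]
      grind
    exact hfiber ▸ hH.exists_restrictTo_eq_top_of_perfect
      (fun n ↦ commutator_specialLinearGroup_eq_top (hd n) (hF n)) n₀

end Fibers

/-- Let `dₙ ≥ 2` and let `Fₙ` be finite fields (of cardinality `qₙ`) such that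
(1) `qₙ > 3` whenever `dₙ = 2`, and (2) there is no infinite `I ⊆ ℕ` on which the `dₙ`
are constant and the `qₙ` strictly increasing. Then `∏ n, SL(dₙ, Fₙ)` cannot be written
as the union of a countable increasing chain of proper subgroups. -/
theorem stmt_11 (d : ℕ → ℕ) (F : ℕ → Type*) [∀ n, Field (F n)] [∀ n, Fintype (F n)]
    (hd : ∀ n, 2 ≤ d n)
    (h1 : ∀ n, d n = 2 → 3 < Fintype.card (F n))
    (h2 : ¬ ∃ (I : Set ℕ) (d₀ : ℕ), I.Infinite ∧ (∀ n ∈ I, d n = d₀) ∧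
        ∀ n ∈ I, ∀ m ∈ I, n < m → Fintype.card (F n) < Fintype.card (F m)) :
    ¬ ∃ H : ℕ → Subgroup (∀ n, Matrix.SpecialLinearGroup (Fin (d n)) (F n)),
        Monotone H ∧ (∀ t, H t ≠ ⊤) ∧
          ∀ g : ∀ n, Matrix.SpecialLinearGroup (Fin (d n)) (F n), ∃ t, g ∈ H t := by
  rintro ⟨H, hmono, hproper, hmem⟩
  obtain ⟨t, ht⟩ := stmt_11_general hd h1 (fun d₀ ↦ not_infinite.mp fun hinf ↦
    have ⟨I, hI, hIinf, hlt⟩ := exists_infinite_strictMonoOn_of_infinite_image hinf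
    h2 ⟨I, d₀, hIinf, hI, fun _ hn _ hm ↦ hlt hn hm⟩) ⟨hmono, hmem⟩
  exact hproper t ht
end

section
/- Let n ≥ 1, let q be a prime power, and let p be an odd prime which is a primitive prime divisor of q^{4n} − 1 (i.e., p divides q^{4n} − 1 but p does not divide q^k − 1 for any 1 ≤ k < 4n). Let C(4n, q) be the set of elements of SL(4n, GF(q)) that are conjugate in GL(4n, GF(q)) to the permutation matrix of a fixed-point-free involution of the index set {1, …, 4n}. Then there exist an element ψ ∈ SL(4n, GF(q)) of order p and elements π_1, π_2 ∈ C(4n, q) such that ψ = π_1 π_2. -/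
/-- Membership in the class `C(m, q)`: an element of `SL(m, F)` conjugate in `GL(m, F)`
to the permutation matrix of a fixed-point-free involution of `Fin m`. -/
def MemC (m : ℕ) (F : Type*) [Field F] (x : Matrix.SpecialLinearGroup (Fin m) F) : Prop :=
  ∃ (σ : Equiv.Perm (Fin m)) (g : GL (Fin m) F),
    σ ^ 2 = 1 ∧ (∀ i, σ i ≠ i) ∧
    (g : Matrix (Fin m) (Fin m) F) * (x : Matrix (Fin m) (Fin m) F) *
        ((g⁻¹ : GL (Fin m) F) : Matrix (Fin m) (Fin m) F) = σ.permMatrix F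

/-!
Let `K / F` be a Galois extension of degree `4 * n` and `τ` an element of order two of its Galois
group. In a normal basis `τ` acts as a fixed-point-free involution, and so does every conjugate
`w⁻¹ τ w` of `τ` in the multiple of that basis by `w⁻¹`. The product `(w⁻¹ τ w) τ` is multiplication
by `τ w / w`. Over a field with `q` elements, `τ` is the power map with exponent `q ^ (2 * n)`, so
`τ w / w = w ^ (q ^ (2 * n) - 1)` takes every order dividing `q ^ (2 * n) + 1`, because `Kˣ` is
cyclic of order `(q ^ (2 * n) - 1) * (q ^ (2 * n) + 1)`.
-/

open Module

section FreeInvolutions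

variable {ι κ R M N : Type*}

section Semiring

variable [CommSemiring R] [AddCommMonoid M] [Module R M] [AddCommMonoid N] [Module R N]

/-- The endomorphism `f` permutes some basis indexed by `ι` through a fixed-point-free involution
of `ι`. This is the coordinate-free counterpart of `MemC`. -/
def IsFreeBasisInvolution (ι : Type*) (f : End R M) : Prop :=
  ∃ (b : Basis ι R M) (σ : Equiv.Perm ι), σ ^ 2 = 1 ∧ (∀ i, σ i ≠ i) ∧ ∀ i, f (b i) = b (σ i)

theorem IsFreeBasisInvolution.reindex {f : End R M} (hf : IsFreeBasisInvolution ι f) (e : ι ≃ κ) :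
    IsFreeBasisInvolution κ f := by
  obtain ⟨b, σ, hσ, hfix, hfb⟩ := hf
  refine ⟨b.reindex e, e.permCongrHom σ, ?_, fun k hk ↦ hfix (e.symm k) ?_, fun k ↦ ?_⟩
  · rw [← map_pow, hσ, map_one]
  · simpa [← Equiv.eq_symm_apply] using hk
  · simp [hfb]

theorem IsFreeBasisInvolution.conj {f : End R M} (hf : IsFreeBasisInvolution ι f) (e : M ≃ₗ[R] N) :
    IsFreeBasisInvolution ι (e.conj f) := by
  obtain ⟨b, σ, hσ, hfix, hfb⟩ := hf
  exact ⟨b.map e, σ, hσ, hfix, fun i ↦ by simp [LinearEquiv.conj_apply, hfb]⟩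

-- `permMatrix` has its ones at `(i, σ i)`, whereas a linear map has its columns at the images of
-- the basis vectors: hence the inverse.
theorem toMatrix_eq_permMatrix_inv [Fintype ι] [DecidableEq ι] (b : Basis ι R M) {f : End R M}
    {σ : Equiv.Perm ι} (hf : ∀ i, f (b i) = b (σ i)) :
    LinearMap.toMatrix b b f = σ⁻¹.permMatrix R := by
  ext i j
  simp [LinearMap.toMatrix_apply, hf, Finsupp.single_apply, PEquiv.toMatrix_apply,
    Equiv.eq_symm_apply, eq_comm]

end Semiring

theorem sign_eq_one_of_sq_eq_one_of_forall_apply_ne [Fintype ι] [DecidableEq ι]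
    {σ : Equiv.Perm ι} (hσ : σ ^ 2 = 1) (hfix : ∀ i, σ i ≠ i) (hcard : 4 ∣ Fintype.card ι) :
    Equiv.Perm.sign σ = 1 := by
  have hfixed : Fintype.card (Function.fixedPoints σ) = 0 :=
    Fintype.card_eq_zero_iff.mpr ⟨fun x ↦ hfix x.1 x.2⟩
  rw [Equiv.Perm.sign_of_pow_two_eq_one hσ, hfixed]
  exact Even.neg_one_pow (by grind)

theorem IsFreeBasisInvolution.det_eq_one [Fintype ι] [CommRing R] [AddCommGroup M] [Module R M]
    {f : End R M} (hf : IsFreeBasisInvolution ι f) (hcard : 4 ∣ Fintype.card ι) :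
    LinearMap.det f = 1 := by
  classical
  obtain ⟨b, σ, hσ, hfix, hfb⟩ := hf
  rw [← LinearMap.det_toMatrix b, toMatrix_eq_permMatrix_inv b hfb, Matrix.det_permutation,
    Equiv.Perm.sign_inv, sign_eq_one_of_sq_eq_one_of_forall_apply_ne hσ hfix hcard,
    Units.val_one, Int.cast_one]

end FreeInvolutions

section ClassC

variable {m : ℕ} {F V : Type*} [Field F] [AddCommGroup V] [Module F V]

theorem IsFreeBasisInvolution.memC {f : End F V} (hf : IsFreeBasisInvolution (Fin m) f)
    (b : Basis (Fin m) F V) {x : Matrix.SpecialLinearGroup (Fin m) F}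
    (hx : (x : Matrix (Fin m) (Fin m) F) = LinearMap.toMatrix b b f) : MemC m F x := by
  obtain ⟨c, σ, hσ, hfix, hfc⟩ := hf
  let g : GL (Fin m) F :=
    ⟨c.toMatrix b, b.toMatrix c, c.toMatrix_mul_toMatrix_flip b, b.toMatrix_mul_toMatrix_flip c⟩
  refine ⟨σ⁻¹, g, by rw [inv_pow, hσ, inv_one], fun i hi ↦ hfix i ?_, ?_⟩
  · exact (Equiv.Perm.inv_eq_iff_eq.mp hi).symm
  · rw [hx, ← toMatrix_eq_permMatrix_inv c hfc]
    exact basis_toMatrix_mul_linearMap_toMatrix_mul_basis_toMatrix c b c b f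

theorem IsFreeBasisInvolution.exists_memC (hm : 4 ∣ m) {f : End F V}
    (hf : IsFreeBasisInvolution (Fin m) f) (b : Basis (Fin m) F V) :
    ∃ x : Matrix.SpecialLinearGroup (Fin m) F,
      MemC m F x ∧ (x : Matrix (Fin m) (Fin m) F) = LinearMap.toMatrixAlgEquiv b f := by
  have hdet : (LinearMap.toMatrix b b f).det = 1 := by
    rw [LinearMap.det_toMatrix, hf.det_eq_one (by simpa using hm)]
  exact ⟨⟨_, hdet⟩, hf.memC b rfl, rfl⟩

theorem exists_memC_mul_orderOf_eq (hm : 4 ∣ m) {f g : End F V}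
    (hf : IsFreeBasisInvolution (Fin m) f) (hg : IsFreeBasisInvolution (Fin m) g) :
    ∃ ψ π₁ π₂ : Matrix.SpecialLinearGroup (Fin m) F,
      orderOf ψ = orderOf (f * g) ∧ MemC m F π₁ ∧ MemC m F π₂ ∧ ψ = π₁ * π₂ := by
  have ⟨b, _⟩ := hf
  obtain ⟨π₁, hπ₁, hπ₁f⟩ := hf.exists_memC hm b
  obtain ⟨π₂, hπ₂, hπ₂g⟩ := hg.exists_memC hm b
  refine ⟨π₁ * π₂, π₁, π₂, ?_, hπ₁, hπ₂, rfl⟩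
  rw [← orderOf_injective Matrix.SpecialLinearGroup.coeMonoidHom
    Matrix.SpecialLinearGroup.coeMonoidHom_injective, map_mul,
    Matrix.SpecialLinearGroup.coeMonoidHom_apply, Matrix.SpecialLinearGroup.coeMonoidHom_apply,
    hπ₁f, hπ₂g, ← map_mul]
  exact (LinearMap.toMatrixAlgEquiv b).toMulEquiv.orderOf_eq _

end ClassC

section Galois

variable {F K : Type*} [Field F] [Field K] [Algebra F K]

theorem isFreeBasisInvolution_of_orderOf_eq_two [FiniteDimensional F K] [IsGalois F K]
    {τ : Gal(K/F)} (hτ : orderOf τ = 2) : IsFreeBasisInvolution Gal(K/F) τ.toLinearMap := by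
  obtain ⟨hsq, hne⟩ := orderOf_eq_prime_iff.mp hτ
  refine ⟨IsGalois.normalBasis F K, Equiv.mulLeft τ, ?_, fun ρ ↦ by simpa using hne, fun ρ ↦ ?_⟩
  · rw [Equiv.pow_mulLeft, hsq, Equiv.mulLeft_one, Equiv.Perm.one_def]
  · rw [Equiv.coe_mulLeft, IsGalois.normalBasis_apply ρ, IsGalois.normalBasis_apply (τ * ρ)]
    rfl

theorem conj_smul_inv_mul_self_eq_lmul {τ : Gal(K/F)} (hτ : τ ^ 2 = 1) (w : Kˣ) :
    (DistribMulAction.toLinearEquiv F K w⁻¹).conj τ.toLinearMap * τ.toLinearMap =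
      Algebra.lmul F K (τ w / w) := by
  ext x
  have hττ : τ (τ x) = x := by rw [← AlgEquiv.mul_apply, ← pow_two, hτ, AlgEquiv.one_apply]
  calc ((w⁻¹ : Kˣ) : K) * τ (((w⁻¹⁻¹ : Kˣ) : K) * τ x)
      = (w : K)⁻¹ * (τ w * x) := by rw [map_mul, hττ, inv_inv, Units.val_inv_eq_inv_val]
    _ = τ w / w * x := by rw [div_eq_inv_mul, mul_assoc]

theorem exists_memC_mul_orderOf_eq_div [FiniteDimensional F K] [IsGalois F K] {m : ℕ}
    (hm : 4 ∣ m) (hrank : finrank F K = m) {τ : Gal(K/F)} (hτ : orderOf τ = 2) (w : Kˣ) :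
    ∃ ψ π₁ π₂ : Matrix.SpecialLinearGroup (Fin m) F,
      orderOf ψ = orderOf (τ w / w) ∧ MemC m F π₁ ∧ MemC m F π₂ ∧ ψ = π₁ * π₂ := by
  have e : Gal(K/F) ≃ Fin m :=
    Finite.equivFinOfCardEq ((IsGalois.card_aut_eq_finrank F K).trans hrank)
  have hfree := (isFreeBasisInvolution_of_orderOf_eq_two hτ).reindex e
  have horder : orderOf (Algebra.lmul F K (τ w / w)) = orderOf (τ w / w) :=
    orderOf_injective (Algebra.lmul F K).toMonoidHom Algebra.lmul_injective _
  rw [← horder, ← conj_smul_inv_mul_self_eq_lmul (orderOf_dvd_iff_pow_eq_one.mp hτ.dvd) w]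
  exact exists_memC_mul_orderOf_eq hm (hfree.conj _) hfree

end Galois

section FiniteField

theorem exists_orderOf_pow_eq_of_mul_dvd_card {G : Type*} [Group G] [Finite G] [IsCyclic G]
    {a d : ℕ} (h : a * d ∣ Nat.card G) : ∃ w : G, orderOf (w ^ a) = d := by
  obtain ⟨c, hc⟩ := h
  rw [mul_right_comm, mul_comm a] at hc
  obtain ⟨g, hg⟩ := IsCyclic.exists_ofOrder_eq_natCard (α := G)
  rw [hc] at hg
  have hca : 0 < c * a := pos_of_mul_pos_left (hc ▸ Nat.card_pos) d.zero_le
  refine ⟨g ^ c, ?_⟩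
  rw [← pow_mul, orderOf_pow_of_dvd hca.ne' (hg ▸ dvd_mul_right _ d), hg,
    Nat.mul_div_cancel_left d hca]

theorem pow_two_mul_sub_one_eq_mul (x m : ℕ) :
    x ^ (2 * m) - 1 = (x ^ m - 1) * (x ^ m + 1) := by
  rw [mul_comm 2, pow_mul, mul_comm, ← Nat.sq_sub_sq, one_pow]

variable {F K : Type*} [Field F] [Fintype F] [Field K] [Algebra F K] {m : ℕ}

theorem natCard_units_of_finrank_eq_two_mul [Module.Finite F K] (hrank : finrank F K = 2 * m) :
    Nat.card Kˣ = (Fintype.card F ^ m - 1) * (Fintype.card F ^ m + 1) := by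
  rw [Nat.card_units, Module.natCard_eq_pow_finrank (K := F), Nat.card_eq_fintype_card, hrank,
    pow_two_mul_sub_one_eq_mul]

theorem frobenius_pow_div_self [Algebra.IsAlgebraic F K] (w : Kˣ) :
    (FiniteField.frobeniusAlgEquivOfAlgebraic F K ^ m) w / w =
      ((w ^ (Fintype.card F ^ m - 1) : Kˣ) : K) := by
  rw [AlgEquiv.coe_pow, FiniteField.coe_frobeniusAlgEquivOfAlgebraic_iterate,
    Units.val_pow_eq_pow_val, div_eq_iff w.ne_zero, ← pow_succ,
    Nat.sub_add_cancel (Nat.one_le_pow _ _ Fintype.card_pos)]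

theorem orderOf_frobenius_pow_eq_two [Finite K] (hm : m ≠ 0) (hrank : finrank F K = 2 * m) :
    orderOf (FiniteField.frobeniusAlgEquivOfAlgebraic F K ^ m) = 2 := by
  have hfrob := FiniteField.orderOf_frobeniusAlgEquivOfAlgebraic F K
  rw [hrank] at hfrob
  rw [orderOf_pow_of_dvd hm (hfrob ▸ dvd_mul_left m 2), hfrob,
    Nat.mul_div_cancel _ (Nat.pos_of_ne_zero hm)]

end FiniteField

theorem stmt_12_general (n : ℕ) (hn : 1 ≤ n) (F : Type*) [Field F] [Fintype F]
    (d : ℕ) (hd : d ∣ Fintype.card F ^ (2 * n) + 1) :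
    ∃ ψ π₁ π₂ : Matrix.SpecialLinearGroup (Fin (4 * n)) F,
      orderOf ψ = d ∧ MemC (4 * n) F π₁ ∧ MemC (4 * n) F π₂ ∧ ψ = π₁ * π₂ := by
  obtain ⟨r, _⟩ := CharP.exists F
  have : Fact r.Prime := ⟨CharP.char_is_prime F r⟩
  have : NeZero (4 * n) := ⟨by lia⟩
  let K := FiniteField.Extension F r (4 * n)
  have hrank : finrank F K = 4 * n := FiniteField.finrank_extension F r (4 * n)
  have hrank_two : finrank F K = 2 * (2 * n) := by rw [hrank]; ring
  have hcard := natCard_units_of_finrank_eq_two_mul hrank_two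
  obtain ⟨w, hw⟩ : ∃ w : Kˣ, orderOf (w ^ (Fintype.card F ^ (2 * n) - 1)) = d :=
    exists_orderOf_pow_eq_of_mul_dvd_card (hcard ▸ mul_dvd_mul_left _ hd)
  have hτ := orderOf_frobenius_pow_eq_two (by lia) hrank_two
  rw [← hw, ← orderOf_units, ← frobenius_pow_div_self]
  exact exists_memC_mul_orderOf_eq_div (dvd_mul_right 4 n) hrank hτ w

/-- Let `n ≥ 1`, `F` a finite field of cardinality `q`, and `p` an odd prime which is a
primitive prime divisor of `q^{4n} - 1`. Then some element `ψ ∈ SL(4n, F)` of order `p`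
is a product of two elements of the class `C(4n, q)`. -/
theorem stmt_12 (n : ℕ) (hn : 1 ≤ n) (F : Type*) [Field F] [Fintype F]
    (p : ℕ) (hp : p.Prime) (hodd : Odd p)
    (hdvd : p ∣ Fintype.card F ^ (4 * n) - 1)
    (hppd : ∀ k, 1 ≤ k → k < 4 * n → ¬ p ∣ Fintype.card F ^ k - 1) :
    ∃ ψ π₁ π₂ : Matrix.SpecialLinearGroup (Fin (4 * n)) F,
      orderOf ψ = p ∧ MemC (4 * n) F π₁ ∧ MemC (4 * n) F π₂ ∧ ψ = π₁ * π₂ := by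
  rw [show 4 * n = 2 * (2 * n) by ring, pow_two_mul_sub_one_eq_mul, hp.dvd_mul] at hdvd
  exact stmt_12_general n hn F p (hdvd.resolve_left (hppd (2 * n) (by lia) (by lia)))
end

section
/- Let m = 4n for some n ≥ 1 and let q be a prime power. Let C(m, q) be the set of elements of SL(m, GF(q)) that are conjugate in GL(m, GF(q)) to the permutation matrix of a fixed-point-free involution of the index set {1, …, m}. Then for every φ ∈ SL(m, GF(q)) there exist π_1, …, π_10 ∈ C(m, q) such that φ = π_1 π_2 ⋯ π_10. -/
/-!
Write a matrix of determinant one in 2 × 2 blocks of even size, and call the permutation matrices of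
fixed-point-free involutions, up to conjugacy, swaps. Since matrix rings over a field have stable
range one, some conjugate of the matrix has an invertible upper left block, and it then factors as a
swap times `[0 e; 1 0] * [1 x; 0 1]` with `det e = 1`. The shear is a product of two swaps: of two
conjugates of `diag(1, -1)` if `2 ≠ 0`; otherwise `x` is a sum of two units, and a shear by a unit
is itself a swap. It remains to write `[0 e; 1 0]` as a product of seven swaps.

If `F` has more than two elements, `e` is conjugate to the product of a lower unitriangular, an
upper unitriangular and a diagonal matrix, all of determinant one. Each of them is a commutator: a
diagonal matrix `d` because `d * y` is a cyclic rotation of `y` for suitable diagonal `y`, and a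
unitriangular matrix `U` because `y` and `U * y` can both be made unitriangular with nowhere
vanishing superdiagonal, hence conjugate to a Jordan block. Splitting off a commutator costs two
swaps, since `[0 a⁻¹; a 0] * [0 b; b⁻¹ 0] * [0 e; 1 0] = [0 (b * a)⁻¹ * e; a * b 0]` is conjugate
to `[0 ⁅a, b⁆ * e; 1 0]`.

Over the field with two elements, the rational canonical form shows that `e` is a product of three
involutions: on a companion block, two reflections of the basis compose to a shift, which differs
from `e` by a transvection. An involution is `1 + N` with `N * N = 0`, and `diag(1, 1 + N)` is
conjugate to the shear by `N`, so each involution costs two swaps.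
-/

namespace SwapProducts

open Matrix
open scoped Pointwise commutatorElement

section Monoid

variable {α : Type*} [Monoid α]

theorem mem_conjugatesOf_pow_of_isConj {s a b : α} {n : ℕ} (hab : IsConj a b)
    (ha : a ∈ conjugatesOf s ^ n) : b ∈ conjugatesOf s ^ n := by
  obtain ⟨c, hc⟩ := hab
  obtain rfl : b = c * a * ↑c⁻¹ := by rw [hc.eq, Units.mul_inv_cancel_right]
  induction n generalizing a with
  | zero =>
    obtain rfl : a = 1 := ha
    simp
  | succ n ih =>
    obtain ⟨x, hx, y, hy, rfl⟩ := ha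
    have hsplit : (c : α) * (x * y) * ↑c⁻¹ = c * x * ↑c⁻¹ * (c * y * ↑c⁻¹) := by
      simp only [mul_assoc, Units.inv_mul_cancel_left]
    simp only [hsplit]
    have hconj : IsConj y (c * y * ↑c⁻¹) := ⟨c, by simp [SemiconjBy]⟩
    exact Set.mul_mem_mul (ih hx (by simp [SemiconjBy])) (hy.trans hconj)

theorem isConj_of_mul_eq_one [IsDedekindFiniteMonoid α] {a b g h : α} (hgh : g * h = 1)
    (hab : g * a = b * g) : IsConj a b :=
  ⟨⟨g, h, hgh, mul_eq_one_symm hgh⟩, hab⟩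

/-- `IsCommutator c`: the element `c` of a monoid is the commutator of two units. -/
def IsCommutator (c : α) : Prop :=
  ∃ a b : αˣ, (⁅a, b⁆ : αˣ) = c

theorem isCommutator_of_isConj_mul {c : α} {y : αˣ} (h : IsConj (y : α) (c * y)) :
    IsCommutator c := by
  obtain ⟨g, hg⟩ := h
  refine ⟨g, y, ?_⟩
  simp [commutatorElement_def, hg.eq]

theorem IsCommutator.isConj {c d : α} (hc : IsCommutator c) (hcd : IsConj c d) :
    IsCommutator d := by
  obtain ⟨a, b, rfl⟩ := hc
  obtain ⟨g, hg⟩ := hcd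
  refine ⟨MulAut.conj g a, MulAut.conj g b, ?_⟩
  rw [← map_commutatorElement, MulAut.conj_apply, Units.val_mul, Units.val_mul, hg.eq,
    Units.mul_inv_cancel_right]

end Monoid

theorem isUnit_add_mul_of_mul_add_mul_eq_one {R : Type*} [Ring R] {g : Rˣ} {p c α β : R}
    (hp : IsIdempotentElem p) (h : α * (g * p) + β * c = 1) :
    IsUnit (g * p + g * (1 - p) * β * c) := by
  have hz : ((1 - p) * α * g * p) * ((1 - p) * α * g * p) = 0 := by
    have : p * (1 - p) = 0 := by rw [mul_sub, mul_one, hp.eq, sub_self]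
    calc _ = (1 - p) * α * g * (p * (1 - p)) * α * g * p := by noncomm_ring
      _ = 0 := by rw [this]; noncomm_ring
  have hfactor : g * p + g * (1 - p) * β * c = g * (1 - (1 - p) * α * g * p) := by
    rw [mul_assoc _ β, eq_sub_of_add_eq' h]
    noncomm_ring
  rw [hfactor]
  exact g.isUnit.mul (IsNilpotent.isUnit_one_sub ⟨2, by rw [sq, hz]⟩)

section Diagonalization

variable {ι F : Type*} [Fintype ι] [DecidableEq ι] [Field F]

theorem exists_eq_units_mul_diagonal_mul (A : Matrix ι ι F) :
    ∃ (P Q : (Matrix ι ι F)ˣ) (d : ι → F), A = P * diagonal d * Q := by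
  obtain ⟨L, L', d, hA⟩ := Pivot.exists_list_transvec_mul_diagonal_mul_list_transvec A
  have hunit (L : List (TransvectionStruct ι F)) :
      IsUnit (L.map TransvectionStruct.toMatrix).prod := by
    simp [isUnit_iff_isUnit_det]
  exact ⟨(hunit L).unit, (hunit L').unit, d, hA⟩

theorem exists_eq_unit_mul_idempotent (A : Matrix ι ι F) :
    ∃ (g : (Matrix ι ι F)ˣ) (p : Matrix ι ι F), IsIdempotentElem p ∧ A = g * p := by
  classical
  obtain ⟨P, Q, d, rfl⟩ := exists_eq_units_mul_diagonal_mul A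
  let E : Matrix ι ι F := diagonal fun i => if d i = 0 then 0 else 1
  have hE : E * E = E := by simp [E]
  obtain ⟨D, hD⟩ : IsUnit (diagonal fun i => if d i = 0 then 1 else d i : Matrix ι ι F) := by
    rw [isUnit_diagonal, Pi.isUnit_iff]
    intro i
    by_cases hi : d i = 0 <;> simp [hi]
  have hDE : (D : Matrix ι ι F) * E = diagonal d := by
    rw [hD, diagonal_mul_diagonal]
    congr 1
    ext i
    by_cases hi : d i = 0 <;> simp [hi]
  refine ⟨P * D * Q, (↑Q⁻¹ : Matrix ι ι F) * E * Q, ?_, ?_⟩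
  · simp only [IsIdempotentElem, mul_assoc, Units.mul_inv_cancel_left]
    rw [← mul_assoc E, hE]
  · simp only [← hDE, Units.val_mul, mul_assoc, Units.mul_inv_cancel_left]

theorem exists_isUnit_add_mul {a c α β : Matrix ι ι F} (h : α * a + β * c = 1) :
    ∃ t, IsUnit (a + t * c) := by
  obtain ⟨g, p, hp, rfl⟩ := exists_eq_unit_mul_idempotent a
  exact ⟨_, isUnit_add_mul_of_mul_add_mul_eq_one hp h⟩

theorem exists_add_units_eq_of_even_card (hι : Even (Fintype.card ι)) (A : Matrix ι ι F) :
    ∃ B C : (Matrix ι ι F)ˣ, (B + C : Matrix ι ι F) = A := by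
  obtain ⟨P, Q, d, rfl⟩ := exists_eq_units_mul_diagonal_mul A
  obtain ⟨r, hr⟩ := hι
  let f : ι ≃ Fin r ⊕ Fin r := Fintype.equivOfCardEq (by simpa using hr)
  let R := reindexAlgEquiv F F f.symm
  let D₁ : Matrix (Fin r) (Fin r) F := diagonal fun i => d (f.symm (Sum.inl i))
  let D₂ : Matrix (Fin r) (Fin r) F := diagonal fun i => d (f.symm (Sum.inr i))
  have hsum : diagonal d = R (fromBlocks 0 1 1 D₂) + R (fromBlocks D₁ (-1) (-1) 0) := by
    rw [← map_add, fromBlocks_add, ← R.symm_apply_eq]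
    ext (i | i) (j | j) <;> simp [R, D₁, D₂, diagonal_apply]
  have hB : IsUnit (R (fromBlocks 0 1 1 D₂)) :=
    (IsUnit.of_mul_eq_one (fromBlocks (-D₂) 1 1 0) (by simp [fromBlocks_multiply])).map R
  have hC : IsUnit (R (fromBlocks D₁ (-1) (-1) 0)) :=
    (IsUnit.of_mul_eq_one (fromBlocks 0 (-1) (-1) (-D₁)) (by simp [fromBlocks_multiply])).map R
  refine ⟨P * hB.unit * Q, P * hC.unit * Q, ?_⟩
  simp only [hsum, Units.val_mul, IsUnit.unit_spec, mul_add, add_mul]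

end Diagonalization

section Blocks

variable {ι F : Type*} [Fintype ι] [DecidableEq ι] [Field F]

/-- The permutation matrix exchanging the two copies of `ι` in `ι ⊕ ι`, used as the representative
of the class of permutation matrices of fixed-point-free involutions. -/
def blockSwap (ι F : Type*) [DecidableEq ι] [Field F] : Matrix (ι ⊕ ι) (ι ⊕ ι) F :=
  fromBlocks 0 1 1 0

/-- The conjugacy class of `blockSwap`: the coordinate-free form of `MemC`. -/
def swapClass (ι F : Type*) [Fintype ι] [DecidableEq ι] [Field F] :
    Set (Matrix (ι ⊕ ι) (ι ⊕ ι) F) :=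
  conjugatesOf (blockSwap ι F)

/-- The block shear `[1 A; 0 1]`. -/
def blockShear (A : Matrix ι ι F) : Matrix (ι ⊕ ι) (ι ⊕ ι) F :=
  fromBlocks 1 A 0 1

/-- The block companion matrix `[0 A; 1 0]`, the product of `blockSwap` and `diag(1, A)`. -/
def blockCompanion (A : Matrix ι ι F) : Matrix (ι ⊕ ι) (ι ⊕ ι) F :=
  fromBlocks 0 A 1 0

theorem det_blockSwap (hι : Even (Fintype.card ι)) : (blockSwap ι F).det = 1 := by
  have hfactor : blockSwap ι F =
      blockShear 1 * fromBlocks (-1) 0 1 1 * (fromBlocks 1 (-1) 0 1) := by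
    simp [blockSwap, blockShear, fromBlocks_multiply]
  rw [hfactor]
  simp [blockShear, det_neg, hι.neg_one_pow]

theorem det_of_mem_swapClass (hι : Even (Fintype.card ι)) {x : Matrix (ι ⊕ ι) (ι ⊕ ι) F}
    (hx : x ∈ swapClass ι F) : x.det = 1 := by
  have hdet : (blockSwap ι F).det = x.det := isConj_iff_eq.mp (detMonoidHom.map_isConj hx)
  rw [← hdet, det_blockSwap hι]

theorem det_blockCompanion (hι : Even (Fintype.card ι)) (e : Matrix ι ι F) :
    (blockCompanion e).det = e.det := by
  have hfactor : blockCompanion e = blockSwap ι F * fromBlocks 1 0 0 e := by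
    simp [blockCompanion, blockSwap, fromBlocks_multiply]
  simp [hfactor, det_blockSwap hι]

theorem antidiagonal_mem_swapClass (g : (Matrix ι ι F)ˣ) :
    fromBlocks 0 (g : Matrix ι ι F) (↑g⁻¹ : Matrix ι ι F) 0 ∈ swapClass ι F := by
  refine isConj_of_mul_eq_one (g := fromBlocks g 0 0 1) (h := fromBlocks ↑g⁻¹ 0 0 1) ?_ ?_ <;>
    simp [blockSwap, fromBlocks_multiply]

theorem blockCompanion_one_mem_swapClass :
    blockCompanion (1 : Matrix ι ι F) ∈ swapClass ι F :=
  IsConj.refl _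

omit [Fintype ι] in
theorem blockShear_zero : blockShear (0 : Matrix ι ι F) = 1 :=
  fromBlocks_one

theorem blockShear_mul (A B : Matrix ι ι F) :
    blockShear A * blockShear B = blockShear (A + B) := by
  simp [blockShear, fromBlocks_multiply, add_comm]

theorem blockShear_mul_neg (A : Matrix ι ι F) : blockShear A * blockShear (-A) = 1 := by
  rw [blockShear_mul, add_neg_cancel, blockShear_zero]

theorem blockShear_mem_of_two_ne_zero (h2 : (2 : F) ≠ 0) (A : Matrix ι ι F) :
    blockShear A ∈ swapClass ι F ^ 2 := by
  have hhalf (B : Matrix ι ι F) : (2 : F)⁻¹ • B + (2 : F)⁻¹ • B = B := by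
    rw [← add_smul, ← two_mul, mul_inv_cancel₀ h2, one_smul]
  have hsign : fromBlocks 1 0 0 (-1) ∈ swapClass ι F := by
    refine isConj_of_mul_eq_one (g := fromBlocks 1 1 1 (-1))
      (h := (2 : F)⁻¹ • fromBlocks 1 1 1 (-1)) ?_ ?_
    · simp [fromBlocks_multiply, fromBlocks_smul, hhalf]
    · simp [blockSwap, fromBlocks_multiply]
  have hsign' : fromBlocks 1 A 0 (-1) ∈ swapClass ι F := by
    refine hsign.trans (isConj_of_mul_eq_one (blockShear_mul_neg (-(2 : F)⁻¹ • A)) ?_)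
    have hneg : (2 : F)⁻¹ • A = -((2 : F)⁻¹ • A) + A := by rw [eq_neg_add_iff_add_eq, hhalf]
    simp [blockShear, fromBlocks_multiply, ← hneg]
  rw [sq]
  refine ⟨_, hsign, _, hsign', ?_⟩
  simp [blockShear, fromBlocks_multiply]

theorem blockShear_mem_of_two_eq_zero (h2 : (2 : F) = 0) (A : (Matrix ι ι F)ˣ) :
    blockShear (A : Matrix ι ι F) ∈ swapClass ι F := by
  have hA : (A : Matrix ι ι F) + A = 0 := by rw [← two_smul F, h2, zero_smul]
  refine isConj_of_mul_eq_one (g := fromBlocks 0 A 1 1)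
    (h := fromBlocks (-↑A⁻¹) 1 ↑A⁻¹ 0) ?_ ?_
  · simp [fromBlocks_multiply]
  · simp [blockShear, blockSwap, fromBlocks_multiply, hA]

theorem blockShear_mem (hι : Even (Fintype.card ι)) (A : Matrix ι ι F) :
    blockShear A ∈ swapClass ι F ^ 2 := by
  by_cases h2 : (2 : F) = 0
  · obtain ⟨B, C, rfl⟩ := exists_add_units_eq_of_even_card hι A
    rw [← blockShear_mul, sq]
    exact Set.mul_mem_mul (blockShear_mem_of_two_eq_zero h2 B) (blockShear_mem_of_two_eq_zero h2 C)
  · exact blockShear_mem_of_two_ne_zero h2 A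

omit [DecidableEq ι] in
theorem exists_idempotent_of_mul_self_eq_zero {N : Matrix ι ι F} (hN : N * N = 0) :
    ∃ p : Matrix ι ι F, IsIdempotentElem p ∧ p * N = N ∧ N * p = 0 := by
  classical
  obtain ⟨g, p, hp, rfl⟩ := exists_eq_unit_mul_idempotent N
  have hpgp : p * g * p = 0 := by
    simpa only [mul_assoc, Units.mul_right_eq_zero] using hN
  refine ⟨1 - p, hp.one_sub, ?_, ?_⟩
  · rw [sub_mul, one_mul, ← mul_assoc, hpgp, sub_zero]
  · rw [mul_sub, mul_one, mul_assoc, hp.eq, sub_self]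

theorem fromBlocks_one_add_mem (hι : Even (Fintype.card ι)) {N : Matrix ι ι F} (hN : N * N = 0) :
    fromBlocks 1 0 0 (1 + N) ∈ swapClass ι F ^ 2 := by
  obtain ⟨p, hp, hpN, hNp⟩ := exists_idempotent_of_mul_self_eq_zero hN
  refine mem_conjugatesOf_pow_of_isConj ?_ (blockShear_mem hι N)
  -- Exchanging the images of `p` in the two copies moves `N` onto the diagonal.
  refine isConj_of_mul_eq_one (g := fromBlocks (1 - p) p p (1 - p))
    (h := fromBlocks (1 - p) p p (1 - p)) ?_ ?_
  · simp [fromBlocks_multiply, mul_sub, sub_mul, hp.eq]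
  · simp only [blockShear, fromBlocks_multiply, mul_one, mul_zero, add_zero, sub_mul, one_mul, hpN,
      sub_self, zero_add, mul_sub, zero_mul, add_mul, hNp, fromBlocks_inj, true_and]
    abel

theorem blockCompanion_mul_mem {n : ℕ} {c e : Matrix ι ι F} (hc : IsCommutator c)
    (he : blockCompanion e ∈ swapClass ι F ^ n) :
    blockCompanion (c * e) ∈ swapClass ι F ^ (n + 2) := by
  obtain ⟨a, b, rfl⟩ := hc
  have hprod := Set.mul_mem_mul
    (Set.mul_mem_mul (antidiagonal_mem_swapClass a⁻¹) (antidiagonal_mem_swapClass b)) he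
  rw [← sq, ← pow_add, add_comm] at hprod
  refine mem_conjugatesOf_pow_of_isConj ?_ hprod
  refine isConj_of_mul_eq_one (g := fromBlocks ↑(a * b) 0 0 1)
    (h := fromBlocks ↑(a * b)⁻¹ 0 0 1) ?_ ?_
  · simp [fromBlocks_multiply, mul_assoc]
  · simp [blockCompanion, fromBlocks_multiply, commutatorElement_def, mul_assoc]

theorem blockCompanion_mem_of_isConj {n : ℕ} {e e' : Matrix ι ι F} (h : IsConj e e')
    (he : blockCompanion e ∈ swapClass ι F ^ n) : blockCompanion e' ∈ swapClass ι F ^ n := by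
  obtain ⟨g, hg⟩ := h
  refine mem_conjugatesOf_pow_of_isConj ?_ he
  refine isConj_of_mul_eq_one (g := fromBlocks g 0 0 g) (h := fromBlocks ↑g⁻¹ 0 0 ↑g⁻¹) ?_ ?_
  · simp [fromBlocks_multiply]
  · simp [blockCompanion, fromBlocks_multiply, hg.eq]

theorem blockCompanion_mem_of_involutions (hι : Even (Fintype.card ι)) (h2 : (2 : F) = 0)
    {x y z : Matrix ι ι F} (hx : x * x = 1) (hy : y * y = 1) (hz : z * z = 1) :
    blockCompanion (x * y * z) ∈ swapClass ι F ^ 7 := by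
  have hdouble (A : Matrix ι ι F) : A + A = 0 := by rw [← two_smul F, h2, zero_smul]
  have hmem {x : Matrix ι ι F} (hx : x * x = 1) : fromBlocks 1 0 0 x ∈ swapClass ι F ^ 2 := by
    have hN : (x - 1) * (x - 1) = 0 := by
      calc (x - 1) * (x - 1) = x * x + 1 - (x + x) := by noncomm_ring
        _ = 0 := by rw [hx, hdouble, hdouble, sub_zero]
    simpa using fromBlocks_one_add_mem hι hN
  have hprod := Set.mul_mem_mul blockCompanion_one_mem_swapClass
    (Set.mul_mem_mul (Set.mul_mem_mul (hmem hx) (hmem hy)) (hmem hz))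
  rw [← pow_add, ← pow_add, ← pow_succ'] at hprod
  convert hprod using 1
  simp [blockCompanion, fromBlocks_multiply]

theorem exists_isConj_isUnit_toBlocks₁₁ {φ : Matrix (ι ⊕ ι) (ι ⊕ ι) F} (hφ : IsUnit φ) :
    ∃ φ', IsConj φ' φ ∧ IsUnit φ'.toBlocks₁₁ := by
  obtain ⟨ψ, hψ⟩ := hφ.exists_left_inv
  rw [← fromBlocks_toBlocks φ, ← fromBlocks_toBlocks ψ, fromBlocks_multiply, ← fromBlocks_one,
    fromBlocks_inj] at hψ
  obtain ⟨t, ht⟩ := exists_isUnit_add_mul hψ.1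
  have hinv : blockShear (-t) * blockShear t = 1 := mul_eq_one_symm (blockShear_mul_neg t)
  refine ⟨blockShear t * φ * blockShear (-t), isConj_of_mul_eq_one hinv ?_, ?_⟩
  · rw [← mul_assoc, ← mul_assoc, hinv, one_mul]
  · rw [← fromBlocks_toBlocks φ]
    simpa [blockShear, fromBlocks_multiply] using ht

theorem exists_eq_mul_blockCompanion_mul_blockShear {φ : Matrix (ι ⊕ ι) (ι ⊕ ι) F}
    (hφ : IsUnit φ.toBlocks₁₁) :
    ∃ p ∈ swapClass ι F, ∃ e x, φ = p * blockCompanion e * blockShear x := by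
  obtain ⟨k, hak⟩ := hφ.exists_right_inv
  rw [← fromBlocks_toBlocks φ]
  generalize φ.toBlocks₁₁ = a, φ.toBlocks₁₂ = b, φ.toBlocks₂₁ = c, φ.toBlocks₂₂ = d at hak ⊢
  let δ := d - c * (k * b)
  let g : Matrix (ι ⊕ ι) (ι ⊕ ι) F := fromBlocks a 0 c 1
  let h : Matrix (ι ⊕ ι) (ι ⊕ ι) F := fromBlocks k 0 (-(c * k)) 1
  have hgh : g * h = 1 := by simp [g, h, fromBlocks_multiply, hak]
  have hhg : h * g = 1 := mul_eq_one_symm hgh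
  have hS : blockSwap ι F * blockSwap ι F = 1 := by simp [blockSwap, fromBlocks_multiply]
  refine ⟨g * blockSwap ι F * h, isConj_of_mul_eq_one hgh ?_, a * δ, c * δ + k * b, ?_⟩
  · rw [mul_assoc _ h, hhg, mul_one]
  have hcompanion : blockCompanion (a * δ) * blockShear (c * δ + k * b) =
      g * blockSwap ι F * fromBlocks 1 (k * b) 0 δ := by
    simp [g, blockCompanion, blockShear, blockSwap, fromBlocks_multiply, add_comm]
  calc fromBlocks a b c d = g * fromBlocks 1 (k * b) 0 δ := by
        simp [g, δ, fromBlocks_multiply, ← mul_assoc, hak]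
    _ = g * (blockSwap ι F * (h * g) * blockSwap ι F) * fromBlocks 1 (k * b) 0 δ := by
        rw [hhg, mul_one, hS, mul_one]
    _ = g * blockSwap ι F * h * (g * blockSwap ι F * fromBlocks 1 (k * b) 0 δ) := by
        simp only [mul_assoc]
    _ = _ := by rw [← hcompanion, ← mul_assoc]

theorem mem_swapClass_pow_of_blockCompanion_mem (hι : Even (Fintype.card ι)) {n : ℕ}
    (H : ∀ e : Matrix ι ι F, e.det = 1 → blockCompanion e ∈ swapClass ι F ^ n)
    {φ : Matrix (ι ⊕ ι) (ι ⊕ ι) F} (hφ : φ.det = 1) : φ ∈ swapClass ι F ^ (n + 3) := by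
  have hunit : IsUnit φ := by simp [isUnit_iff_isUnit_det, hφ]
  obtain ⟨φ', hconj, hφ'⟩ := exists_isConj_isUnit_toBlocks₁₁ hunit
  obtain ⟨p, hp, e, x, rfl⟩ := exists_eq_mul_blockCompanion_mul_blockShear hφ'
  have hdet : e.det = 1 := by
    have hconj_det := isConj_iff_eq.mp (detMonoidHom.map_isConj hconj)
    simpa [hφ, det_of_mem_swapClass hι hp, det_blockCompanion hι, blockShear] using hconj_det
  refine mem_conjugatesOf_pow_of_isConj hconj ?_
  have hmem := Set.mul_mem_mul (Set.mul_mem_mul hp (H e hdet)) (blockShear_mem hι x)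
  rwa [← pow_succ', ← pow_add] at hmem

end Blocks

section Unitriangular

variable {ι α F : Type*} [Field F]

/-- A matrix that is triangular with respect to the ordering of the indices by `b` and has ones on
the diagonal: upper unitriangular for `b = id`, lower unitriangular for `b = toDual`. -/
def IsUnitriangular [LT α] (M : Matrix ι ι F) (b : ι → α) : Prop :=
  M.BlockTriangular b ∧ ∀ i, M i i = 1

theorem IsUnitriangular.mul [Fintype ι] [LinearOrder α] {b : ι → α} (hb : b.Injective)
    {M N : Matrix ι ι F} (hM : IsUnitriangular M b) (hN : IsUnitriangular N b) :
    IsUnitriangular (M * N) b := by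
  refine ⟨hM.1.mul hN.1, fun i => ?_⟩
  rw [mul_apply, Finset.sum_eq_single i, hM.2, hN.2, one_mul]
  · intro j _ hji
    rcases (hb.ne hji).lt_or_gt with hlt | hgt
    · rw [hM.1 hlt, zero_mul]
    · rw [hN.1 hgt, mul_zero]
  · simp

theorem isUnitriangular_one [DecidableEq ι] [Preorder α] (b : ι → α) :
    IsUnitriangular (1 : Matrix ι ι F) b :=
  ⟨blockTriangular_one, one_apply_eq⟩

theorem isUnitriangular_transvection [DecidableEq ι] [Preorder α] {b : ι → α} {i j : ι}
    (hij : b i < b j) (c : F) : IsUnitriangular (transvection i j c) b := by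
  refine ⟨blockTriangular_transvection hij.le c, fun l => ?_⟩
  have hl : ¬(i = l ∧ j = l) := by
    rintro ⟨rfl, rfl⟩
    exact hij.false
  simp [transvection, hl]

variable [Fintype ι] [LinearOrder ι]

theorem IsUnitriangular.det_upper {M : Matrix ι ι F} (hM : IsUnitriangular M id) : M.det = 1 := by
  simp [det_of_isUpperTriangular hM.1, hM.2]

theorem IsUnitriangular.det_lower {M : Matrix ι ι F} (hM : IsUnitriangular M OrderDual.toDual) :
    M.det = 1 := by
  simp [det_of_isLowerTriangular M hM.1, hM.2]

end Unitriangular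

section TriangularFactorization

variable {F : Type*} [Field F] {k : ℕ}

/-- Bordering by a last row and column. -/
def border (A : Matrix (Fin k) (Fin k) F) (B : Matrix (Fin k) (Fin 1) F)
    (C : Matrix (Fin 1) (Fin k) F) (D : Matrix (Fin 1) (Fin 1) F) :
    Matrix (Fin (k + 1)) (Fin (k + 1)) F :=
  reindexAlgEquiv F F finSumFinEquiv (fromBlocks A B C D)

theorem border_mul (A A' : Matrix (Fin k) (Fin k) F) (B B' : Matrix (Fin k) (Fin 1) F)
    (C C' : Matrix (Fin 1) (Fin k) F) (D D' : Matrix (Fin 1) (Fin 1) F) :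
    border A B C D * border A' B' C' D' =
      border (A * A' + B * C') (A * B' + B * D') (C * A' + D * C') (C * B' + D * D') := by
  simp only [border, ← map_mul, fromBlocks_multiply]

theorem exists_eq_border (M : Matrix (Fin (k + 1)) (Fin (k + 1)) F) :
    ∃ A B C D, M = border A B C D :=
  ⟨_, _, _, _, by rw [border, fromBlocks_toBlocks, AlgEquiv.apply_symm_apply]⟩

theorem isUnitriangular_border_upper {U : Matrix (Fin k) (Fin k) F} (hU : IsUnitriangular U id)
    (B : Matrix (Fin k) (Fin 1) F) : IsUnitriangular (border U B 0 1) id := by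
  refine ⟨fun i j hji => ?_, fun i => ?_⟩
  · induction i using Fin.lastCases <;> induction j using Fin.lastCases
    · exact absurd hji (lt_irrefl _)
    · simp [border]
    · exact absurd hji (Fin.le_last _).not_gt
    · simpa [border] using hU.1 (by simpa using hji)
  · induction i using Fin.lastCases <;> simp [border, hU.2]

theorem isUnitriangular_border_lower {L : Matrix (Fin k) (Fin k) F}
    (hL : IsUnitriangular L OrderDual.toDual) (C : Matrix (Fin 1) (Fin k) F) :
    IsUnitriangular (border L 0 C 1) OrderDual.toDual := by
  refine ⟨fun i j hij => ?_, fun i => ?_⟩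
  · induction i using Fin.lastCases <;> induction j using Fin.lastCases
    · exact absurd hij (lt_irrefl _)
    · exact absurd hij (Fin.le_last _).not_gt
    · simp [border]
    · simpa [border] using hL.1 (by simpa using hij)
  · induction i using Fin.lastCases <;> simp [border, hL.2]

theorem exists_border_diagonal_eq (d : Fin k → F) (D : Matrix (Fin 1) (Fin 1) F) :
    ∃ d', border (diagonal d) 0 0 D = diagonal d' := by
  have hD : D = diagonal (fun i => D i i) := by
    ext i j
    simp [Subsingleton.elim j i]
  exact ⟨_, by rw [hD, border, fromBlocks_diagonal, coe_reindexAlgEquiv, reindex_apply,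
    submatrix_diagonal_equiv]⟩

theorem exists_lower_mul_eq_of_isUnit {e : Matrix (Fin (k + 1)) (Fin (k + 1)) F} (he : IsUnit e) :
    ∃ L e', IsUnitriangular L OrderDual.toDual ∧ e = L * e' ∧
      e' (Fin.last k) (Fin.last k) ≠ 0 := by
  by_cases hlast : e (Fin.last k) (Fin.last k) = 0
  · obtain ⟨i, hi⟩ : ∃ i, e i (Fin.last k) ≠ 0 := by
      by_contra! hcol
      exact (isUnit_iff_isUnit_det e).mp he |>.ne_zero (det_eq_zero_of_column_eq_zero _ hcol)
    have hne : Fin.last k ≠ i := by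
      rintro rfl
      exact hi hlast
    refine ⟨transvection (Fin.last k) i (-1), transvection (Fin.last k) i 1 * e,
      isUnitriangular_transvection (Fin.lt_last_iff_ne_last.mpr hne.symm) _, ?_, ?_⟩
    · rw [← mul_assoc, transvection_mul_transvection_same _ _ hne, neg_add_cancel,
        transvection_zero, one_mul]
    · simpa [hlast] using hi
  · exact ⟨1, e, isUnitriangular_one _, (one_mul e).symm, hlast⟩

theorem exists_eq_border_mul_border_mul_border {e : Matrix (Fin (k + 1)) (Fin (k + 1)) F}
    (he : IsUnit e) (hlast : e (Fin.last k) (Fin.last k) ≠ 0) :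
    ∃ X S D Y, IsUnit S ∧ e = border 1 X 0 1 * border S 0 0 D * border 1 0 Y 1 := by
  obtain ⟨A, B, C, D, rfl⟩ := exists_eq_border e
  have hD : IsUnit D.det := by simpa [border] using hlast
  have := D.invertibleOfIsUnitDet hD
  have hfactor := congrArg (reindexAlgEquiv F F finSumFinEquiv)
    (fromBlocks_eq_of_invertible₂₂ A B C D)
  rw [map_mul, map_mul] at hfactor
  refine ⟨_, _, _, _, ?_, hfactor⟩
  rw [isUnit_iff_isUnit_det, border, coe_reindexAlgEquiv, det_reindex_self, det_fromBlocks₂₂] at he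
  exact (isUnit_iff_isUnit_det _).mpr (isUnit_of_mul_isUnit_right he)

theorem exists_eq_lower_mul_upper_mul_diagonal_mul_lower {e : Matrix (Fin k) (Fin k) F}
    (he : IsUnit e) :
    ∃ L U d L', IsUnitriangular L OrderDual.toDual ∧ IsUnitriangular U id ∧
      IsUnitriangular L' OrderDual.toDual ∧ e = L * U * diagonal d * L' := by
  induction k with
  | zero =>
    exact ⟨1, 1, 0, 1, isUnitriangular_one _, isUnitriangular_one _, isUnitriangular_one _,
      Subsingleton.elim _ _⟩
  | succ k ih =>
    obtain ⟨L₀, e, hL₀, rfl, hlast⟩ := exists_lower_mul_eq_of_isUnit he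
    obtain ⟨X, S, D, Y, hS, rfl⟩ :=
      exists_eq_border_mul_border_mul_border (isUnit_of_mul_isUnit_right he) hlast
    obtain ⟨L, U, d, L', hL, hU, hL', rfl⟩ := ih hS
    obtain ⟨d', hd'⟩ := exists_border_diagonal_eq d D
    refine ⟨L₀ * border L 0 0 1, border U (L⁻¹ * X) 0 1, d', border L' 0 Y 1,
      hL₀.mul OrderDual.toDual.injective (isUnitriangular_border_lower hL 0),
      isUnitriangular_border_upper hU _, isUnitriangular_border_lower hL' Y, ?_⟩
    have hLinv : L * (L⁻¹ * X) = X := mul_nonsing_inv_cancel_left L X (by simp [hL.det_lower])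
    rw [mul_assoc L₀, mul_assoc L₀, mul_assoc L₀, ← hd']
    simp [border_mul, mul_assoc, hLinv]

end TriangularFactorization

section Commutators

variable {F : Type*} [Field F]

theorem isConj_submatrix {ι R : Type*} [Fintype ι] [DecidableEq ι] [CommRing R] (M : Matrix ι ι R)
    (σ : Equiv.Perm ι) : IsConj M (M.submatrix σ σ) := by
  have hσ : σ.permMatrix R * σ⁻¹.permMatrix R = 1 := by
    rw [← permMatrix_mul, inv_mul_cancel, permMatrix_one]
  refine isConj_of_mul_eq_one hσ ?_
  ext i j
  simp [PEquiv.toMatrix_toPEquiv_mul, PEquiv.mul_toMatrix_toPEquiv]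

theorem pow_apply_eq_zero_of_lt {n m : ℕ} {N : Matrix (Fin n) (Fin n) F}
    (hN : ∀ i j, j ≤ i → N i j = 0) {i j : Fin n} (hij : (j : ℕ) < i + m) : (N ^ m) i j = 0 := by
  induction m generalizing i with
  | zero => exact one_apply_ne (by omega)
  | succ m ih =>
    rw [pow_succ', mul_apply]
    refine Finset.sum_eq_zero fun l _ => ?_
    obtain hl | hl := le_or_gt l i
    · rw [hN i l hl, zero_mul]
    · rw [ih (by omega), mul_zero]

theorem pow_apply_ne_zero {n m : ℕ} {N : Matrix (Fin n) (Fin n) F}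
    (hN : ∀ i j, j ≤ i → N i j = 0) (hsucc : ∀ i j : Fin n, (j : ℕ) = i + 1 → N i j ≠ 0)
    {i j : Fin n} (hij : (j : ℕ) = i + m) : (N ^ m) i j ≠ 0 := by
  induction m generalizing i with
  | zero =>
    obtain rfl : j = i := Fin.ext hij
    simp
  | succ m ih =>
    let l : Fin n := ⟨i + 1, by omega⟩
    rw [pow_succ', mul_apply, Finset.sum_eq_single l]
    · exact mul_ne_zero (hsucc i l rfl) (ih (by simp only [l]; omega))
    · intro b _ hb
      obtain hbi | hbi := le_or_gt b i
      · rw [hN i b hbi, zero_mul]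
      · have hne : (b : ℕ) ≠ i + 1 := fun h => hb (Fin.ext h)
        rw [pow_apply_eq_zero_of_lt hN (by omega), mul_zero]
    · simp

/-- The nilpotent Jordan block, with ones on the superdiagonal. -/
def superdiagShift (F : Type*) [Field F] (n : ℕ) : Matrix (Fin n) (Fin n) F :=
  of fun i j => if (j : ℕ) = i + 1 then 1 else 0

theorem mul_superdiagShift_zero {k : ℕ} (P : Matrix (Fin (k + 1)) (Fin (k + 1)) F)
    (i : Fin (k + 1)) : (P * superdiagShift F (k + 1)) i 0 = 0 := by
  simp [mul_apply, superdiagShift]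

theorem mul_superdiagShift_succ {k : ℕ} (P : Matrix (Fin (k + 1)) (Fin (k + 1)) F)
    (i : Fin (k + 1)) (j : Fin k) :
    (P * superdiagShift F (k + 1)) i j.succ = P i j.castSucc := by
  rw [mul_apply, Finset.sum_eq_single j.castSucc]
  · simp [superdiagShift]
  · intro l _ hl
    have hne : (j : ℕ) ≠ l := fun h => hl (Fin.ext h.symm)
    simp [superdiagShift, hne]
  · simp

theorem isConj_superdiagShift {k : ℕ} {N : Matrix (Fin (k + 1)) (Fin (k + 1)) F}
    (hN : ∀ i j, j ≤ i → N i j = 0)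
    (hsucc : ∀ i j : Fin (k + 1), (j : ℕ) = i + 1 → N i j ≠ 0) :
    IsConj (superdiagShift F (k + 1)) N := by
  let P : Matrix (Fin (k + 1)) (Fin (k + 1)) F := of fun i j => (N ^ (k - j : ℕ)) i (Fin.last k)
  have hP : IsUnit P := by
    have hupper : P.IsUpperTriangular := fun i j hji => by
      have hlt : (j : ℕ) < i := hji
      exact pow_apply_eq_zero_of_lt hN (by rw [Fin.val_last]; omega)
    rw [isUnit_iff_isUnit_det, det_of_isUpperTriangular hupper, isUnit_iff_ne_zero,
      Finset.prod_ne_zero_iff]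
    exact fun i _ => pow_apply_ne_zero hN hsucc (by rw [Fin.val_last]; omega)
  have hNP : N * P = P * superdiagShift F (k + 1) := by
    ext i j
    have hcol : (N * P) i j = (N ^ (k - j + 1 : ℕ)) i (Fin.last k) := by
      simp [pow_succ', mul_apply, P]
    rw [hcol]
    induction j using Fin.cases with
    | zero =>
      rw [mul_superdiagShift_zero]
      exact pow_apply_eq_zero_of_lt hN (by rw [Fin.val_last, Fin.val_zero]; omega)
    | succ j =>
      have hexp : k - (j.succ : ℕ) + 1 = k - (j.castSucc : ℕ) := by
        rw [Fin.val_succ, Fin.val_castSucc]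
        omega
      rw [mul_superdiagShift_succ, hexp]
      rfl
  exact ⟨hP.unit, hNP.symm⟩

theorem IsUnitriangular.isConj_one_add_superdiagShift {k : ℕ}
    {M : Matrix (Fin (k + 1)) (Fin (k + 1)) F} (hM : IsUnitriangular M id)
    (hsucc : ∀ i j : Fin (k + 1), (j : ℕ) = i + 1 → M i j ≠ 0) :
    IsConj (1 + superdiagShift F (k + 1)) M := by
  obtain ⟨P, hP⟩ : IsConj (superdiagShift F (k + 1)) (M - 1) := by
    refine isConj_superdiagShift (fun i j hji => ?_) (fun i j hij => ?_)
    · obtain hlt | rfl := hji.lt_or_eq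
      · rw [Matrix.sub_apply, hM.1 hlt, one_apply_ne hlt.ne', sub_zero]
      · rw [Matrix.sub_apply, hM.2, one_apply_eq, sub_self]
    · rw [Matrix.sub_apply, one_apply_ne (by omega), sub_zero]
      exact hsucc i j hij
  refine ⟨P, ?_⟩
  simpa using (SemiconjBy.one_right P.val).add_right hP

theorem exists_ne_zero_add_ne_zero [Nontrivial Fˣ] (s : F) : ∃ y, y ≠ 0 ∧ s + y ≠ 0 := by
  obtain ⟨a, b, hab⟩ := exists_pair_ne Fˣ
  by_cases hs : s + a = 0
  · refine ⟨b, b.ne_zero, fun hs' => hab (Units.ext ?_)⟩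
    exact add_left_cancel (hs.trans hs'.symm)
  · exact ⟨a, a.ne_zero, hs⟩

theorem IsUnitriangular.isCommutator_upper {k : ℕ} [Nontrivial Fˣ]
    {U : Matrix (Fin (k + 1)) (Fin (k + 1)) F} (hU : IsUnitriangular U id) : IsCommutator U := by
  choose y hy hsy using exists_ne_zero_add_ne_zero (F := F)
  let Y : Matrix (Fin (k + 1)) (Fin (k + 1)) F :=
    of fun i j => if i = j then 1 else if (j : ℕ) = i + 1 then y (U i j) else 0
  have hY : IsUnitriangular Y id := by
    refine ⟨fun i j hji => ?_, fun i => by simp [Y]⟩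
    have hlt : (j : ℕ) < i := hji
    simp only [Y, of_apply]
    rw [if_neg (by omega), if_neg (by omega)]
  have hYsucc {i j : Fin (k + 1)} (hij : (j : ℕ) = i + 1) : Y i j = y (U i j) := by
    simp only [Y, of_apply]
    rw [if_neg (by omega), if_pos hij]
  have hUY {i j : Fin (k + 1)} (hij : (j : ℕ) = i + 1) : (U * Y) i j = y (U i j) + U i j := by
    have hne : i ≠ j := by
      rintro rfl
      omega
    rw [mul_apply, Finset.sum_eq_add i j hne, hU.2, hY.2, hYsucc hij, one_mul, mul_one]
    · rintro l - ⟨hli, hlj⟩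
      have hl : (j : ℕ) ≠ l + 1 := fun h => hli (Fin.ext (by omega))
      simp [Y, hlj, hl]
    · simp
    · simp
  obtain ⟨Yu, hYu⟩ : IsUnit Y := by simp [isUnit_iff_isUnit_det, hY.det_upper]
  have hconj := hY.isConj_one_add_superdiagShift fun i j hij => by
    rw [hYsucc hij]
    exact hy _
  have hconj' := (hU.mul Function.injective_id hY).isConj_one_add_superdiagShift fun i j hij => by
    rw [hUY hij, add_comm]
    exact hsy _
  refine isCommutator_of_isConj_mul (y := Yu) ?_
  rw [hYu]
  exact hconj.symm.trans hconj'

theorem IsUnitriangular.isCommutator_lower {k : ℕ} [Nontrivial Fˣ]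
    {L : Matrix (Fin (k + 1)) (Fin (k + 1)) F} (hL : IsUnitriangular L OrderDual.toDual) :
    IsCommutator L := by
  have hrev : IsUnitriangular (L.submatrix Fin.revPerm Fin.revPerm) id :=
    ⟨fun i j hji => hL.1 (by simpa using hji), fun i => hL.2 _⟩
  exact hrev.isCommutator_upper.isConj (isConj_submatrix L Fin.revPerm).symm

theorem exists_finRotate_eq_mul {M : Type*} [CommMonoid M] {k : ℕ} (d : Fin (k + 1) → M)
    (hd : ∏ i, d i = 1) : ∃ f : Fin (k + 1) → M, ∀ i, f (finRotate _ i) = d i * f i := by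
  refine ⟨fun i => Fin.partialProd d i.castSucc, fun i => ?_⟩
  simp only [mul_comm (d i), ← Fin.partialProd_succ]
  induction i using Fin.lastCases with
  | last =>
    have hlast : Fin.partialProd d (Fin.last (k + 1)) = ∏ i, d i := by
      rw [Fin.partialProd, ← List.prod_ofFn, List.take_of_length_le (by simp)]
    rw [finRotate_last, Fin.succ_last, Fin.castSucc_zero, Fin.partialProd_zero, hlast, hd]
  | cast i => simp [finRotate_apply]

theorem isCommutator_diagonal {k : ℕ} {d : Fin (k + 1) → F} (hd : ∏ i, d i = 1) :
    IsCommutator (diagonal d) := by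
  have hd_unit (i) : IsUnit (d i) :=
    isUnit_iff_ne_zero.mpr (Finset.prod_ne_zero_iff.mp (hd ▸ one_ne_zero) i (Finset.mem_univ i))
  choose u hu using hd_unit
  obtain ⟨f, hf⟩ := exists_finRotate_eq_mul u (Units.ext (by simpa [hu] using hd))
  obtain ⟨y, hy⟩ : IsUnit (diagonal fun i => (f i : F)) := by
    simp [isUnit_diagonal, Pi.isUnit_iff]
  refine isCommutator_of_isConj_mul (y := y) ?_
  have hrotate : (diagonal fun i => (f i : F)).submatrix (finRotate _) (finRotate _) =
      diagonal d * diagonal fun i => (f i : F) := by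
    rw [submatrix_diagonal_equiv, diagonal_mul_diagonal]
    congr 1
    ext i
    rw [Function.comp_apply, hf, Units.val_mul, hu]
  rw [hy, ← hrotate]
  exact isConj_submatrix _ _

theorem blockCompanion_mem_of_nontrivial_units {k : ℕ} [Nontrivial Fˣ]
    {e : Matrix (Fin (k + 1)) (Fin (k + 1)) F} (he : e.det = 1) :
    blockCompanion e ∈ swapClass (Fin (k + 1)) F ^ 7 := by
  obtain ⟨L, U, d, L', hL, hU, hL', rfl⟩ :=
    exists_eq_lower_mul_upper_mul_diagonal_mul_lower (e := e)
      (by simp [isUnit_iff_isUnit_det, he])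
  have hd : ∏ i, d i = 1 := by simpa [hL.det_lower, hU.det_upper, hL'.det_lower] using he
  have hmem : blockCompanion (L' * L * (U * (diagonal d * 1))) ∈ swapClass (Fin (k + 1)) F ^ 7 :=
    blockCompanion_mul_mem (hL'.mul OrderDual.toDual.injective hL).isCommutator_lower <|
      blockCompanion_mul_mem hU.isCommutator_upper <|
        blockCompanion_mul_mem (n := 1) (isCommutator_diagonal hd) <| by
          rw [pow_one]
          exact blockCompanion_one_mem_swapClass
  refine blockCompanion_mem_of_isConj ?_ hmem
  obtain ⟨l, hl⟩ : IsUnit L' := by simp [isUnit_iff_isUnit_det, hL'.det_lower]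
  refine IsConj.symm ⟨l, ?_⟩
  simp [SemiconjBy, hl, mul_assoc]

end Commutators

section TrivialUnits

open Polynomial

/-- `IsMulThreeInvolutions e`: the element `e` of a monoid is a product `x * y * z` with
`x ^ 2 = y ^ 2 = z ^ 2 = 1`. The factors may be trivial. -/
def IsMulThreeInvolutions {α : Type*} [Monoid α] (e : α) : Prop :=
  ∃ x y z : α, x * x = 1 ∧ y * y = 1 ∧ z * z = 1 ∧ x * y * z = e

theorem IsMulThreeInvolutions.map {α β : Type*} [Monoid α] [Monoid β] {e : α}
    (he : IsMulThreeInvolutions e) (f : α →* β) : IsMulThreeInvolutions (f e) := by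
  obtain ⟨x, y, z, hx, hy, hz, rfl⟩ := he
  refine ⟨f x, f y, f z, ?_, ?_, ?_, by simp only [map_mul]⟩ <;> simp only [← map_mul, *, map_one]

theorem isMulThreeInvolutions_piMap {R ι : Type*} {M : ι → Type*} [Semiring R]
    [∀ i, AddCommMonoid (M i)] [∀ i, Module R (M i)] {e : ∀ i, Module.End R (M i)}
    (he : ∀ i, IsMulThreeInvolutions (e i)) :
    IsMulThreeInvolutions (LinearMap.piMap e : Module.End R (∀ i, M i)) := by
  choose x y z hx hy hz he using he
  let f : (∀ i, Module.End R (M i)) →* Module.End R (∀ i, M i) :=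
    { toFun := LinearMap.piMap
      map_one' := rfl
      map_mul' := fun _ _ => rfl }
  exact IsMulThreeInvolutions.map ⟨x, y, z, funext hx, funext hy, funext hz, funext he⟩ f

theorem exists_equiv_pi_adjoinRoot.{u, v} {F : Type u} {V : Type v} [Field F]
    [AddCommGroup V] [Module F V] [FiniteDimensional F V] (e : Module.End F V) :
    ∃ (ι : Type u) (q : ι → F[X]) (L : V ≃ₗ[F] ∀ i, AdjoinRoot (q i)), (∀ i, q i ≠ 0) ∧
      ∀ v i, L (e v) i = AdjoinRoot.root (q i) * L v i := by
  classical
  obtain ⟨ι, _, p, hp, n, ⟨l⟩⟩ := Module.equiv_directSum_of_isTorsion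
    (Module.AEval.isTorsion_of_finiteDimensional F V e)
  let l' : Module.AEval' e ≃ₗ[F[X]] ∀ i, F[X] ⧸ Submodule.span F[X] {p i ^ n i} :=
    l.trans (DirectSum.linearEquivFunOnFintype F[X] ι _)
  refine ⟨ι, fun i => p i ^ n i, (Module.AEval'.of e).trans (l'.restrictScalars F),
    fun i => pow_ne_zero _ (hp i).ne_zero, fun v i => ?_⟩
  change l' (Module.AEval'.of e (e v)) i = _
  rw [← Module.AEval'.X_smul_of, map_smul]
  rfl

variable {F V : Type*} [Field F] [Subsingleton Fˣ] [AddCommGroup V] [Module F V]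

theorem eq_one_of_subsingleton_units {a : F} (ha : a ≠ 0) : a = 1 :=
  congrArg Units.val (Subsingleton.elim (Units.mk0 a ha) 1)

theorem two_eq_zero_of_subsingleton_units : (2 : F) = 0 := by
  have hneg : (-1 : F) = 1 := eq_one_of_subsingleton_units (neg_ne_zero.mpr one_ne_zero)
  linear_combination -hneg

theorem mul_self_eq_one_of_apply_basis_eq {ι : Type*} (b : Module.Basis ι F V) {i₀ : ι}
    {z : Module.End F V} (hz : IsUnit z) (hzb : ∀ i ≠ i₀, z (b i) = b i) : z * z = 1 := by
  let φ := b.coord i₀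
  let w := z (b i₀) - b i₀
  have hφb {i : ι} (hi : i ≠ i₀) : φ (b i) = 0 := by simp [φ, hi]
  have hφb₀ : φ (b i₀) = 1 := by simp [φ]
  have htransvection : z = LinearMap.transvection φ w := by
    refine b.ext fun i => ?_
    obtain rfl | hi := eq_or_ne i i₀
    · simp [LinearMap.transvection.apply, hφb₀, w]
    · simp [LinearMap.transvection.apply, hφb hi, hzb i hi]
  have hφz : φ (z (b i₀)) ≠ 0 := by
    intro hzero
    have hφz : φ ∘ₗ z = 0 := b.ext fun i => by
      obtain rfl | hi := eq_or_ne i i₀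
      · exact hzero
      · simp [hzb i hi, hφb hi]
    obtain ⟨v, hv⟩ := ((Module.End.isUnit_iff z).mp hz).surjective (b i₀)
    have hφv := LinearMap.congr_fun hφz v
    simp [hv, hφb₀] at hφv
  have hφw : φ w = 0 := by
    rw [map_sub, eq_one_of_subsingleton_units hφz, hφb₀, sub_self]
  rw [htransvection, Module.End.mul_eq_comp, LinearMap.transvection.comp_of_left_eq hφw,
    ← two_smul F w, two_eq_zero_of_subsingleton_units, zero_smul,
    LinearMap.transvection.of_right_eq_zero, Module.End.one_eq_id]

theorem isMulThreeInvolutions_of_apply_basis_eq_succ {d : ℕ} (b : Module.Basis (Fin (d + 1)) F V)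
    {e : Module.End F V} (he : IsUnit e) (heb : ∀ i : Fin d, e (b i.castSucc) = b i.succ) :
    IsMulThreeInvolutions e := by
  -- `reflect 1 * reflect 0` is the cyclic shift, which agrees with `e` off the last basis vector.
  let reflect (c : Fin (d + 1)) : Module.End F V := b.constr F fun i => b (c - i)
  have hreflect_apply (c i) : reflect c (b i) = b (c - i) := b.constr_basis F _ i
  have hreflect (c) : reflect c * reflect c = 1 := b.ext fun i => by simp [hreflect_apply]
  have hunit (c) : IsUnit (reflect c) := ⟨⟨_, _, hreflect c, hreflect c⟩, rfl⟩
  refine ⟨reflect 1, reflect 0, reflect 0 * reflect 1 * e, hreflect 1, hreflect 0, ?_, ?_⟩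
  · refine mul_self_eq_one_of_apply_basis_eq b (i₀ := Fin.last d)
      (((hunit 0).mul (hunit 1)).mul he) fun i hi => ?_
    obtain ⟨i, rfl⟩ := Fin.exists_castSucc_eq.mpr hi
    simp [heb, hreflect_apply, ← Fin.coeSucc_eq_succ]
  · calc reflect 1 * reflect 0 * (reflect 0 * reflect 1 * e)
        = reflect 1 * (reflect 0 * reflect 0) * reflect 1 * e := by simp only [mul_assoc]
      _ = e := by rw [hreflect, mul_one, hreflect, one_mul]

theorem isMulThreeInvolutions_lmul_root {q : F[X]} (hq : q ≠ 0)
    (hroot : IsUnit (AdjoinRoot.root q)) :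
    IsMulThreeInvolutions (Algebra.lmul F _ (AdjoinRoot.root q)) := by
  obtain _ | _ := subsingleton_or_nontrivial (AdjoinRoot q)
  · exact ⟨1, 1, 1, mul_one 1, mul_one 1, mul_one 1, LinearMap.ext fun _ => Subsingleton.elim _ _⟩
  · let B := AdjoinRoot.powerBasis hq
    obtain ⟨d, hd⟩ := Nat.exists_eq_add_one_of_ne_zero B.dim_ne_zero
    refine isMulThreeInvolutions_of_apply_basis_eq_succ (B.basis.reindex (finCongr hd))
      (hroot.map _) fun i => ?_
    simp [B, pow_succ']

theorem isMulThreeInvolutions_of_isUnit [FiniteDimensional F V] {e : Module.End F V}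
    (he : IsUnit e) : IsMulThreeInvolutions e := by
  obtain ⟨ι, q, L, hq, hL⟩ := exists_equiv_pi_adjoinRoot e
  let r : ∀ i, AdjoinRoot (q i) := fun i => AdjoinRoot.root (q i)
  have hconj : L.conjAlgEquiv F e = Algebra.lmul F _ r := by
    ext1 v
    funext i
    simp [LinearEquiv.conjAlgEquiv_apply, hL, r]
  have hr : ∀ i, IsUnit (r i) := by
    rw [← Pi.isUnit_iff, ← Algebra.lmul_isUnit_iff (R := F), ← hconj]
    exact he.map (L.conjAlgEquiv F)
  have hprod : IsMulThreeInvolutions (L.conjAlgEquiv F e) := by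
    rw [hconj]
    exact isMulThreeInvolutions_piMap fun i => isMulThreeInvolutions_lmul_root (hq i) (hr i)
  simpa using hprod.map (L.conjAlgEquiv F).symm.toAlgHom.toMonoidHom

theorem blockCompanion_mem_of_subsingleton_units {ι : Type*} [Fintype ι] [DecidableEq ι]
    (hι : Even (Fintype.card ι)) {e : Matrix ι ι F} (he : IsUnit e) :
    blockCompanion e ∈ swapClass ι F ^ 7 := by
  have hlin := isMulThreeInvolutions_of_isUnit (he.map (toLinAlgEquiv' (R := F) (n := ι)))
  have hmat := hlin.map (toLinAlgEquiv' (R := F) (n := ι)).symm.toAlgHom.toMonoidHom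
  obtain ⟨x, y, z, hx, hy, hz, hxyz⟩ : IsMulThreeInvolutions e := by simpa using hmat
  rw [← hxyz]
  exact blockCompanion_mem_of_involutions hι two_eq_zero_of_subsingleton_units hx hy hz

end TrivialUnits

section Transfer

variable {ι F : Type*} [Fintype ι] [DecidableEq ι] [Field F] {m : ℕ}

omit [Fintype ι] in
theorem submatrix_blockSwap (t : Fin m ≃ ι ⊕ ι) :
    (blockSwap ι F).submatrix t t =
      Equiv.Perm.permMatrix F (t.trans ((Equiv.sumComm ι ι).trans t.symm)) := by
  ext i j
  obtain ⟨i, rfl⟩ := t.symm.surjective i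
  obtain ⟨j, rfl⟩ := t.symm.surjective j
  rcases i with i | i <;> rcases j with j | j <;>
    simp [blockSwap, one_apply, Equiv.Perm.permMatrix, PEquiv.toMatrix_apply, eq_comm]

theorem memC_of_reindexAlgEquiv_mem_swapClass (t : Fin m ≃ ι ⊕ ι)
    {x : SpecialLinearGroup (Fin m) F}
    (hx : reindexAlgEquiv F F t (x : Matrix (Fin m) (Fin m) F) ∈ swapClass ι F) :
    MemC m F x := by
  have hconj : IsConj ((blockSwap ι F).submatrix t t) (x : Matrix (Fin m) (Fin m) F) := by
    simpa using (reindexAlgEquiv F F t).symm.toMonoidHom.map_isConj hx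
  obtain ⟨g, hg⟩ := hconj
  refine ⟨t.trans ((Equiv.sumComm ι ι).trans t.symm), g⁻¹, ?_, ?_, ?_⟩
  · ext i
    simp [sq]
  · intro i hi
    rcases hti : t i with a | a <;> simp [Equiv.symm_apply_eq, hti] at hi
  · rw [inv_inv, mul_assoc, ← hg.eq, submatrix_blockSwap, Units.inv_mul_cancel_left]

theorem exists_memC_prod_eq_of_mem_swapClass_pow (hι : Even (Fintype.card ι)) (t : Fin m ≃ ι ⊕ ι)
    {n : ℕ} {x : SpecialLinearGroup (Fin m) F}
    (hx : reindexAlgEquiv F F t (x : Matrix (Fin m) (Fin m) F) ∈ swapClass ι F ^ n) :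
    ∃ π : Fin n → SpecialLinearGroup (Fin m) F,
      (∀ i, MemC m F (π i)) ∧ x = (List.ofFn π).prod := by
  obtain ⟨f, hf⟩ := Set.mem_pow.mp hx
  let R := reindexAlgEquiv F F t
  have hdet (i : Fin n) : (R.symm (f i)).det = 1 :=
    (det_reindex_self t.symm _).trans (det_of_mem_swapClass hι (f i).2)
  let π (i : Fin n) : SpecialLinearGroup (Fin m) F := ⟨R.symm (f i), hdet i⟩
  have hπ (i : Fin n) : R (π i : Matrix (Fin m) (Fin m) F) = f i := R.apply_symm_apply _
  refine ⟨π, fun i => memC_of_reindexAlgEquiv_mem_swapClass t ?_, ?_⟩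
  · rw [hπ]
    exact (f i).2
  · apply SpecialLinearGroup.coeMonoidHom_injective
    apply R.injective
    rw [map_list_prod, map_list_prod, List.map_ofFn, List.map_ofFn]
    exact hf.symm.trans (congrArg (fun l => (List.ofFn l).prod) (funext fun i => (hπ i).symm))

end Transfer

section Main

variable {F : Type*} [Field F]

theorem blockCompanion_mem_of_det_eq_one {r : ℕ} (hr : Even r) {e : Matrix (Fin r) (Fin r) F}
    (he : e.det = 1) : blockCompanion e ∈ swapClass (Fin r) F ^ 7 := by
  obtain _ | k := r
  · rw [Subsingleton.elim (blockCompanion e) (blockCompanion 1 ^ 7)]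
    exact Set.pow_mem_pow blockCompanion_one_mem_swapClass
  obtain _ | _ := subsingleton_or_nontrivial Fˣ
  · exact blockCompanion_mem_of_subsingleton_units (by simpa using hr)
      (by simp [isUnit_iff_isUnit_det, he])
  · exact blockCompanion_mem_of_nontrivial_units he

end Main

end SwapProducts

open SwapProducts in
theorem stmt_13_general (n : ℕ) (F : Type*) [Field F]
    (φ : Matrix.SpecialLinearGroup (Fin (4 * n)) F) :
    ∃ π : Fin 10 → Matrix.SpecialLinearGroup (Fin (4 * n)) F,
      (∀ i, MemC (4 * n) F (π i)) ∧ φ = (List.ofFn π).prod := by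
  have heven : Even (Fintype.card (Fin (2 * n))) := by simp
  let t : Fin (4 * n) ≃ Fin (2 * n) ⊕ Fin (2 * n) :=
    (finCongr (by omega)).trans finSumFinEquiv.symm
  refine exists_memC_prod_eq_of_mem_swapClass_pow heven t ?_
  refine mem_swapClass_pow_of_blockCompanion_mem heven (n := 7) (fun e he => ?_) ?_
  · exact blockCompanion_mem_of_det_eq_one (even_two_mul n) he
  · exact (Matrix.det_reindex_self t _).trans φ.2

/-- Let `m = 4n` with `n ≥ 1` and let `F` be a finite field. Every `φ ∈ SL(m, F)` is a
product of ten elements of the class `C(m, q)`. -/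
theorem stmt_13 (n : ℕ) (hn : 1 ≤ n) (F : Type*) [Field F] [Fintype F]
    (φ : Matrix.SpecialLinearGroup (Fin (4 * n)) F) :
    ∃ π : Fin 10 → Matrix.SpecialLinearGroup (Fin (4 * n)) F,
      (∀ i, MemC (4 * n) F (π i)) ∧ φ = (List.ofFn π).prod :=
  stmt_13_general n F φ
end
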